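/- arXiv:2605.26482 — 2 statements merged into one kernel-verified Lean document; each statement's English description precedes it below -/
import Mathlib

section
/- Let K be a number field and let χ be a Dirichlet character of modulus m. Then the norms of prime ideals 𝔭 of 𝓞_K with χ(N(𝔭)) = 1, listed in non-decreasing order, have consecutive ratios tending to 1. Equivalently: for every ε > 0 there exists X₀ such that for every real X ≥ X₀ there is a prime ideal 𝔭 of 𝓞_K with χ(N(𝔭)) = 1 and X ≤ N(𝔭) ≤ (1+ε)X. -/
section
open Real MeasureTheory Set Filter Topology

noncomputable def kap (l u : ℝ) : ℝ := ∫ t in (0:ℝ)..l, (1 - t / l) * Real.cos (t * u)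

lemma kap_eq {l u : ℝ} (hl : 0 < l) (hu : u ≠ 0) :
    kap l u = (1 - Real.cos (l * u)) / (l * u ^ 2) := by
  have h : ∀ t ∈ uIcc 0 l, HasDerivAt
      (fun t => (1 - t / l) * (Real.sin (t * u) / u) - Real.cos (t * u) / (l * u ^ 2))
      ((1 - t / l) * Real.cos (t * u)) t := by
    intro t _
    have h1 : HasDerivAt (fun t : ℝ => t * u) u t := by simpa using (hasDerivAt_id t).mul_const u
    have h2 : HasDerivAt (fun t : ℝ => 1 - t / l) (-(1 / l)) t := by
      simpa using ((hasDerivAt_id t).div_const l).const_sub 1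
    have := (h2.mul (h1.sin.div_const u)).sub (h1.cos.div_const (l * u ^ 2))
    refine this.congr_deriv ?_
    field_simp
    ring
  unfold kap
  rw [intervalIntegral.integral_eq_sub_of_hasDerivAt h]
  · simp; field_simp; simp; ring
  · exact Continuous.intervalIntegrable (by fun_prop) _ _

lemma kap_zero {l : ℝ} (hl : 0 < l) : kap l 0 = l / 2 := by
  unfold kap
  simp only [mul_zero, Real.cos_zero, mul_one]
  rw [intervalIntegral.integral_sub (by simp) (Continuous.intervalIntegrable (by fun_prop) _ _),
    intervalIntegral.integral_div]
  simp
  field_simp; norm_num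

lemma kap_nonneg {l : ℝ} (hl : 0 < l) (u : ℝ) : 0 ≤ kap l u := by
  by_cases hu : u = 0
  · subst hu; rw [kap_zero hl]; positivity
  · rw [kap_eq hl hu]
    have := Real.cos_le_one (l * u)
    apply div_nonneg (by linarith) (by positivity)

lemma kap_le {l : ℝ} (hl : 0 < l) (u : ℝ) : kap l u ≤ l / 2 := by
  rw [← kap_zero hl]
  unfold kap
  apply intervalIntegral.integral_mono_on hl.le
    (Continuous.intervalIntegrable (by fun_prop) _ _) (Continuous.intervalIntegrable (by fun_prop) _ _)
  intro t ht
  have : t / l ≤ 1 := (div_le_one hl).2 ht.2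
  simp only [mul_zero, Real.cos_zero]
  exact mul_le_mul_of_nonneg_left (Real.cos_le_one _) (by linarith)

lemma kap_mul_sq_le {l : ℝ} (hl : 0 < l) (u : ℝ) : kap l u * u ^ 2 ≤ 2 / l := by
  by_cases hu : u = 0
  · subst hu; simp; positivity
  · rw [kap_eq hl hu]
    have := Real.neg_one_le_cos (l * u)
    rw [div_mul_eq_mul_div, div_le_div_iff₀ (by positivity) hl]
    nlinarith [mul_pos hl (sq_pos_of_ne_zero hu)]

lemma kap_cont (l : ℝ) : Continuous (kap l) := by
  unfold kap
  apply intervalIntegral.continuous_parametric_intervalIntegral_of_continuous'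
  fun_prop

lemma kap_le' {l : ℝ} (hl : 0 < l) (u : ℝ) : kap l u ≤ (l / 2 + 2 / l) * (1 + u ^ 2)⁻¹ := by
  rw [← div_eq_mul_inv, le_div_iff₀ (by positivity)]
  nlinarith [kap_le hl u, kap_mul_sq_le hl u]

lemma kap_integrable {l : ℝ} (hl : 0 < l) : Integrable (kap l) := by
  apply (integrable_inv_one_add_sq.const_mul (l / 2 + 2 / l)).mono' (kap_cont l).aestronglyMeasurable
  filter_upwards with u
  rw [Real.norm_of_nonneg (kap_nonneg hl u)]
  exact kap_le' hl u

lemma kap_scale {l : ℝ} (hl : 0 < l) (u : ℝ) : kap l u = l * kap 1 (l * u) := by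
  by_cases hu : u = 0
  · subst hu; rw [mul_zero, kap_zero hl, kap_zero one_pos]; ring
  · rw [kap_eq hl hu, kap_eq one_pos (by positivity)]
    field_simp

lemma kap_integral {l : ℝ} (hl : 0 < l) : ∫ u, kap l u = ∫ u, kap 1 u := by
  simp_rw [kap_scale hl]
  rw [integral_const_mul, Measure.integral_comp_mul_left]
  rw [abs_of_pos (by positivity), smul_eq_mul]; field_simp

lemma kap_integral_pos : 0 < ∫ u, kap 1 u := by
  rw [integral_pos_iff_support_of_nonneg (fun u => kap_nonneg one_pos u) (kap_integrable one_pos)]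
  have ho : IsOpen (Function.support (kap 1)) := (kap_cont 1).isOpen_support
  apply ho.measure_pos volume
  exact ⟨0, by simp [kap_zero one_pos]⟩

lemma kap_tail {e : ℝ} (he : 0 < e) : ∃ C : ℝ, 0 < C ∧ ∀ u : ℝ, e ≤ |u| →
    1 / u ^ 2 ≤ C * (kap 1 u + kap 1 (u + 1)) := by
  have hc : Real.cos (1/2) < 1 := by
    have h0 : Real.cos (1/2) < Real.cos 0 := by
      apply Real.cos_lt_cos_of_nonneg_of_le_pi_div_two <;> linarith [Real.pi_gt_three]
    rwa [Real.cos_zero] at h0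
  have hc0 : 0 ≤ Real.cos (1/2) := 
    Real.cos_nonneg_of_mem_Icc ⟨by linarith [Real.pi_gt_three], by linarith [Real.pi_gt_three]⟩
  set d := 2 - 2 * Real.cos (1/2) with hd
  have hdp : 0 < d := by rw [hd]; linarith
  set M := (1 + 1 / e) ^ 2 with hM
  have hM1 : 1 ≤ M := by rw [hM]; apply one_le_pow₀; linarith [one_div_pos.2 he]
  refine ⟨M / d, by positivity, fun u hu => ?_⟩
  have hu0 : u ≠ 0 := by rintro rfl; simp at hu; linarith
  have h1 : kap 1 u ≥ (1 - Real.cos u) / (M * u ^ 2) := by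
    rw [kap_eq one_pos hu0, one_mul, one_mul]
    have := Real.cos_le_one u
    have h3 : 0 < u ^ 2 := by positivity
    apply div_le_div_of_nonneg_left (by linarith) h3
    nlinarith
  have h2 : kap 1 (u + 1) ≥ (1 - Real.cos (u + 1)) / (M * u ^ 2) := by
    by_cases hv : u + 1 = 0
    · rw [hv]; simp [kap_nonneg one_pos]
    rw [kap_eq one_pos hv, one_mul, one_mul]
    have := Real.cos_le_one (u + 1)
    have h3 : 0 < (u + 1) ^ 2 := by positivity
    apply div_le_div_of_nonneg_left (by linarith) h3
    rw [hM, ← mul_pow, ← sq_abs, ← sq_abs (_ * u)]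
    apply pow_le_pow_left₀ (abs_nonneg _)
    rw [abs_mul, abs_of_pos (by positivity : 0 < 1 + 1 / e), add_mul, one_mul]
    refine (abs_add_le _ _).trans ?_
    rw [abs_one, div_mul_eq_mul_div, one_mul]
    have := (one_le_div he).2 hu
    linarith
  have h4 : (1 - Real.cos u) + (1 - Real.cos (u+1)) ≥ d := by
    have e1 : Real.cos u = Real.cos (u + 1/2) * Real.cos (1/2) + Real.sin (u+1/2) * Real.sin (1/2) := by
      rw [← Real.cos_sub]; ring_nf
    have e2 : Real.cos (u+1) = Real.cos (u + 1/2) * Real.cos (1/2) - Real.sin (u+1/2) * Real.sin (1/2) := by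
      rw [← Real.cos_add]; ring_nf
    rw [e1, e2, hd]
    nlinarith [Real.cos_le_one (u + 1/2)]
  have h5 : d / (M * u ^ 2) ≤ kap 1 u + kap 1 (u + 1) := by
    refine le_trans ?_ (add_le_add h1 h2)
    rw [← add_div]
    gcongr
  calc 1 / u ^ 2 = M / d * (d / (M * u ^ 2)) := by field_simp
    _ ≤ _ := by gcongr
end

section
open Real MeasureTheory Set Filter Topology

lemma kap_eq_Ioc {l : ℝ} (hl : 0 < l) (u : ℝ) :
    kap l u = ∫ t in Ioc 0 l, (1 - t / l) * Real.cos (t * u) := by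
  unfold kap; rw [intervalIntegral.integral_of_le hl.le]

lemma re_pole {d : ℝ} (hd : 0 < d) (t y : ℝ) :
    (Complex.exp (Complex.I * t * y) * (1 / ((d : ℂ) + t * Complex.I))).re
      = ∫ u in Ioi (0:ℝ), Real.exp (-d * u) * Real.cos (t * (u - y)) := by
  have hre : (-((d : ℂ) + t * Complex.I)).re < 0 := by simp [hd]
  have h1 := integral_exp_mul_complex_Ioi hre 0
  have h2 := integrableOn_exp_mul_complex_Ioi hre 0
  have h3 : Complex.exp (Complex.I * t * y) * (1 / ((d : ℂ) + t * Complex.I)) =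
      ∫ u in Ioi (0:ℝ), Complex.exp (Complex.I * t * y) * Complex.exp (-((d : ℂ) + t * Complex.I) * u) := by
    rw [integral_const_mul, h1]; simp only [Complex.ofReal_zero, mul_zero, Complex.exp_zero]
    rw [neg_div_neg_eq]
  rw [h3, ← Complex.reCLM_apply, ← ContinuousLinearMap.integral_comp_comm _ (h2.const_mul _)]
  apply setIntegral_congr_fun measurableSet_Ioi
  intro u _
  simp only [Complex.reCLM_apply]
  rw [← Complex.exp_add, Complex.exp_re]
  simp
  rw [← Real.cos_neg]
  congr 1
  ring

lemma pole_part {l : ℝ} (hl : 0 < l) {d : ℝ} (hd : 0 < d) (y : ℝ) :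
    ∫ t in Ioc 0 l, (1 - t / l) * (Complex.exp (Complex.I * t * y) * (1 / ((d : ℂ) + t * Complex.I))).re
      = ∫ u in Ioi (0:ℝ), Real.exp (-d * u) * kap l (u - y) := by
  simp_rw [re_pole hd, kap_eq_Ioc hl, ← integral_const_mul]
  rw [integral_integral_swap]
  · congr 1; ext u; congr 1; ext t; ring
  · have h1 : Integrable (fun u : ℝ => Real.exp (-d * u)) (volume.restrict (Ioi 0)) := by
      exact integrableOn_exp_mul_Ioi (by linarith) 0
    have h0 : Integrable (fun t : ℝ => (1:ℝ)) (volume.restrict (Ioc 0 l)) := by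
      simp
    have := h0.mul_prod h1
    apply this.mono'
    · apply Continuous.aestronglyMeasurable
      simp only [Function.uncurry_def]
      fun_prop
    · rw [Measure.prod_restrict, ae_restrict_iff' (measurableSet_Ioc.prod measurableSet_Ioi)]
      filter_upwards with p hp
      obtain ⟨t, u⟩ := p
      simp only [mem_prod, mem_Ioc, mem_Ioi] at hp
      have : t / l ≤ 1 := (div_le_one hl).2 hp.1.2
      have h' : 0 ≤ t / l := div_nonneg hp.1.1.le hl.le
      simp only [Function.uncurry_apply_pair, norm_mul, Real.norm_eq_abs, Real.abs_exp, one_mul]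
      rw [abs_of_nonneg (by linarith : 0 ≤ 1 - t / l)]
      calc _ ≤ 1 * (Real.exp (-d * u) * 1) := by
            gcongr
            · linarith
            · exact Real.abs_cos_le_one _
        _ = _ := by ring

lemma term_re (Λ : ℕ → ℝ) (σ t y : ℝ) (hσ : 1 < σ) (n : ℕ) :
    (Complex.exp (Complex.I * t * y) * LSeries.term (fun n => (Λ n : ℂ)) (σ + t * Complex.I) n).re
    = Λ n * (n : ℝ) ^ (-σ) * Real.cos (t * (Real.log n - y)) := by
  rcases Nat.eq_zero_or_pos n with rfl | hn
  · simp [Real.zero_rpow (by linarith : -σ ≠ 0)]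
  rw [LSeries.term_of_ne_zero hn.ne']
  have hn' : (0:ℝ) < n := by exact_mod_cast hn
  have hnC : (n : ℂ) ≠ 0 := by exact_mod_cast hn.ne'
  rw [div_eq_mul_inv, ← Complex.cpow_neg, Complex.cpow_def_of_ne_zero hnC, mul_left_comm,
    ← Complex.exp_add, Complex.re_ofReal_mul, Complex.exp_re, Real.rpow_def_of_pos hn', 
    ← Complex.natCast_log]
  have e1 : (Complex.I * t * y + ((Real.log n : ℝ) : ℂ) * -(σ + t * Complex.I)).re = Real.log n * -σ := by
    generalize Real.log n = L
    simp
  have e2 : (Complex.I * t * y + ((Real.log n : ℝ) : ℂ) * -(σ + t * Complex.I)).im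
      = -(t * (Real.log n - y)) := by
    generalize Real.log n = L
    simp; ring
  rw [e1, e2, Real.cos_neg, mul_assoc]

lemma sum_part (Λ : ℕ → ℝ) (hΛ : ∀ n, 0 ≤ Λ n) {σ : ℝ} (hσ : 1 < σ)
    (hs : ∀ s : ℂ, 1 < s.re → LSeriesSummable (fun n => (Λ n : ℂ)) s) {l : ℝ} (hl : 0 < l) (y : ℝ) :
    HasSum (fun n : ℕ => Λ n * (n : ℝ) ^ (-σ) * kap l (Real.log n - y))
    (∫ t in Ioc 0 l, (1 - t / l) * (Complex.exp (Complex.I * t * y) *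
      LSeries (fun n => (Λ n : ℂ)) (σ + t * Complex.I)).re) := by
  have hsum : Summable (fun n : ℕ => Λ n * (n : ℝ) ^ (-σ)) := by
    have := (hs (σ + (0:ℝ) * Complex.I) (by simpa using hσ))
    have := (Complex.reCLM.summable this)
    refine this.congr fun n => ?_
    have h := term_re Λ σ 0 0 hσ n
    simpa using h
  rw [← intervalIntegral.integral_of_le hl.le]
  have := intervalIntegral.hasSum_integral_of_dominated_convergence (a := 0) (b := l) (μ := volume)
    (F := fun n t => (1 - t / l) * (Λ n * (n : ℝ) ^ (-σ) * Real.cos (t * (Real.log n - y))))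
    (f := fun t => (1 - t / l) * (Complex.exp (Complex.I * t * y) *
      LSeries (fun n => (Λ n : ℂ)) (σ + t * Complex.I)).re)
    (fun n t => Λ n * (n : ℝ) ^ (-σ)) ?_ ?_ ?_ ?_ ?_
  · have e : (fun n : ℕ => Λ n * (n : ℝ) ^ (-σ) * kap l (Real.log n - y)) = fun n : ℕ => ∫ t in (0:ℝ)..l, (1 - t / l) * (Λ n * (n : ℝ) ^ (-σ) * Real.cos (t * (Real.log n - y))) := by
      ext n
      unfold kap
      rw [← intervalIntegral.integral_const_mul]
      congr 1; ext t; ring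
    rw [e]; exact this
  · intro n
    exact Continuous.aestronglyMeasurable (by fun_prop)
  · intro n
    filter_upwards with t ht
    rw [uIoc_of_le hl.le] at ht
    have : t / l ≤ 1 := (div_le_one hl).2 ht.2
    have h' : 0 ≤ t / l := div_nonneg ht.1.le hl.le
    have h0 : 0 ≤ Λ n * (n : ℝ) ^ (-σ) := mul_nonneg (hΛ n) (by positivity)
    rw [norm_mul, norm_mul, Real.norm_of_nonneg h0, Real.norm_of_nonneg (by linarith : 0 ≤ 1 - t / l)]
    calc _ ≤ 1 * (Λ n * (n : ℝ) ^ (-σ) * 1) := by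
          gcongr
          · linarith
          · exact Real.abs_cos_le_one _
      _ = _ := by ring
  · filter_upwards with t _ using hsum
  · simp
  · filter_upwards with t _
    apply HasSum.mul_left
    have h := (hs (σ + t * Complex.I) (by simpa using hσ)).LSeriesHasSum
    have h2 := Complex.reCLM.hasSum (HasSum.mul_left (Complex.exp (Complex.I * t * y)) h)
    have e : (fun n : ℕ => Λ n * (n : ℝ) ^ (-σ) * Real.cos (t * (Real.log n - y))) = 
      fun n => Complex.reCLM (Complex.exp (Complex.I * t * y) * LSeries.term (fun n => (Λ n : ℂ)) (σ + t * Complex.I) n) := by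
      ext n; rw [← term_re Λ σ t y hσ n]; rfl
    rw [e]
    exact h2
end

section
open Real MeasureTheory Set Filter Topology

noncomputable def RR (G : ℂ → ℂ) (l σ y : ℝ) : ℝ :=
  ∫ t in Ioc 0 l, (1 - t / l) * (Complex.exp (Complex.I * t * y) * G (σ + t * Complex.I)).re

lemma RR_integrand_cont (G : ℂ → ℂ) (hG : ContinuousOn G {s | 1 ≤ s.re}) (l y : ℝ) :
    ContinuousOn (fun p : ℝ × ℝ => (1 - p.2 / l) *
      (Complex.exp (Complex.I * p.2 * y) * G (p.1 + p.2 * Complex.I)).re) {p | 1 ≤ p.1} := by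
  apply ContinuousOn.mul (by fun_prop)
  apply Complex.continuous_re.comp_continuousOn
  apply ContinuousOn.mul (by fun_prop)
  apply hG.comp (by fun_prop)
  intro p hp
  simpa using hp

lemma ident (Λ : ℕ → ℝ) (hΛ : ∀ n, 0 ≤ Λ n)
    (hs : ∀ s : ℂ, 1 < s.re → LSeriesSummable (fun n => (Λ n : ℂ)) s)
    (G : ℂ → ℂ) (hG : ContinuousOn G {s | 1 ≤ s.re})
    (hD : ∀ s : ℂ, 1 < s.re → LSeries (fun n => (Λ n : ℂ)) s = 1 / (s - 1) + G s)
    {σ : ℝ} (hσ : 1 < σ) {l : ℝ} (hl : 0 < l) (y : ℝ) :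
    HasSum (fun n : ℕ => Λ n * (n : ℝ) ^ (-σ) * kap l (Real.log n - y))
     ((∫ u in Ioi (0:ℝ), Real.exp (-(σ - 1) * u) * kap l (u - y)) + RR G l σ y) := by
  convert sum_part Λ hΛ hσ hs hl y using 1
  rw [← pole_part hl (by linarith : 0 < σ - 1), RR, ← integral_add]
  · apply setIntegral_congr_fun measurableSet_Ioc
    intro t _
    simp only
    rw [hD _ (by simpa using hσ), ← mul_add, ← Complex.add_re, ← mul_add]
    congr 5
    push_cast; ring
  · apply (Continuous.integrableOn_Icc _).mono_set Ioc_subset_Icc_self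
    apply Continuous.mul (by fun_prop)
    apply Complex.continuous_re.comp
    apply Continuous.mul (by fun_prop)
    apply Continuous.div (by fun_prop) (by fun_prop)
    intro t h
    have := congrArg Complex.re h
    simp at this; linarith
  · apply (ContinuousOn.integrableOn_Icc _).mono_set Ioc_subset_Icc_self
    exact (RR_integrand_cont G hG l y).comp (f := fun t : ℝ => (σ, t)) (by fun_prop) (fun t _ => hσ.le)

lemma RR_tendsto (G : ℂ → ℂ) (hG : ContinuousOn G {s | 1 ≤ s.re}) (l y : ℝ) :
    Tendsto (fun σ => RR G l σ y) (𝓝[>] 1) (𝓝 (RR G l 1 y)) := by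
  have hc := RR_integrand_cont G hG l y
  have hcomp : IsCompact (Icc (1:ℝ) 2 ×ˢ Icc 0 l) := isCompact_Icc.prod isCompact_Icc
  obtain ⟨M, hM⟩ := hcomp.exists_bound_of_continuousOn (hc.mono (fun p hp => hp.1.1))
  have hev : ∀ᶠ σ : ℝ in 𝓝[>] 1, σ ∈ Ioc (1:ℝ) 2 := Ioc_mem_nhdsGT (by norm_num)
  apply tendsto_integral_filter_of_dominated_convergence (fun _ => M)
  · filter_upwards [hev] with σ hσ
    apply ContinuousOn.aestronglyMeasurable _ measurableSet_Ioc
    exact hc.comp (f := fun t : ℝ => (σ, t)) (by fun_prop) (fun t _ => hσ.1.le)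
  · filter_upwards [hev] with σ hσ
    rw [ae_restrict_iff' measurableSet_Ioc]
    filter_upwards with t ht
    exact hM (σ, t) ⟨⟨hσ.1.le, hσ.2⟩, ⟨ht.1.le, ht.2⟩⟩
  · simp
  · rw [ae_restrict_iff' measurableSet_Ioc]
    filter_upwards with t ht
    have h1 := hc (1, t) (by simp)
    have h2 : Tendsto (fun σ : ℝ => (σ, t)) (𝓝[>] 1) (𝓝[{p | 1 ≤ p.1}] ((1:ℝ), t)) := by
      apply tendsto_nhdsWithin_of_tendsto_nhds_of_eventually_within
      · exact (Continuous.tendsto' (by fun_prop) _ _ rfl).mono_left nhdsWithin_le_nhds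
      · filter_upwards [hev] with σ hσ using hσ.1.le
    exact h1.tendsto.comp h2

lemma RR_RL (G : ℂ → ℂ) (hG : ContinuousOn G {s | 1 ≤ s.re}) (l : ℝ) :
    Tendsto (fun y => RR G l 1 y) atTop (𝓝 0) := by
  have h := Real.tendsto_integral_exp_smul_cocompact
    ((Ioc 0 l).indicator (fun t : ℝ => ((1 - t / l : ℝ) : ℂ) * G (1 + t * Complex.I)))
  have h1 : Tendsto (fun y : ℝ => y * (-(2 * π)⁻¹)) atTop (cocompact ℝ) := by
    refine Tendsto.mono_right ?_ atBot_le_cocompact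
    exact tendsto_id.atTop_mul_const_of_neg (by simp; positivity)
  have h2 := (Complex.continuous_re.tendsto _).comp (h.comp h1)
  simp only [Complex.zero_re] at h2
  refine h2.congr fun y => ?_
  simp only [Function.comp_apply]
  unfold RR
  have e : ∀ v : ℝ, Real.fourierChar (-(v * (y * -(2 * π)⁻¹))) • (Ioc 0 l).indicator (fun t : ℝ => ((1 - t / l : ℝ) : ℂ) * G (1 + t * Complex.I)) v = (Ioc 0 l).indicator (fun t : ℝ => ((1 - t / l : ℝ) : ℂ) * (Complex.exp (Complex.I * t * y) * G (1 + t * Complex.I))) v := by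
    intro v
    by_cases hv : v ∈ Ioc 0 l
    · simp only [indicator_of_mem hv, Circle.smul_def, Real.fourierChar_apply, smul_eq_mul]
      rw [mul_left_comm]
      congr 3
      have : (π : ℂ) ≠ 0 := by exact_mod_cast Real.pi_ne_zero
      push_cast
      field_simp
    · simp [indicator_of_notMem hv]
  simp_rw [e]
  rw [integral_indicator measurableSet_Ioc, ← Complex.reCLM_apply, ← ContinuousLinearMap.integral_comp_comm]
  · apply setIntegral_congr_fun measurableSet_Ioc
    intro t _
    simp only [Complex.reCLM_apply, Complex.re_ofReal_mul]
    norm_num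
  · apply (ContinuousOn.integrableOn_Icc _).mono_set Ioc_subset_Icc_self
    apply ContinuousOn.mul (by fun_prop)
    apply ContinuousOn.mul (by fun_prop)
    apply hG.comp (by fun_prop)
    intro t _
    simp

lemma P_le {l : ℝ} (hl : 0 < l) {d : ℝ} (hd : 0 < d) (y : ℝ) :
    ∫ u in Ioi (0:ℝ), Real.exp (-d * u) * kap l (u - y) ≤ ∫ u, kap 1 u := by
  rw [← kap_integral hl, ← integral_sub_right_eq_self (kap l) y]
  have hi : Integrable (fun u => kap l (u - y)) := (kap_integrable hl).comp_sub_right y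
  refine le_trans ?_ (setIntegral_le_integral (s := Ioi 0) hi (by filter_upwards with u using kap_nonneg hl _))
  apply setIntegral_mono_on _ hi.integrableOn measurableSet_Ioi
  · intro u hu
    have : Real.exp (-d * u) ≤ 1 := by
      rw [Real.exp_le_one_iff]; nlinarith [mem_Ioi.1 hu]
    nlinarith [kap_nonneg hl (u - y)]
  · apply hi.integrableOn.mono'
    · exact Continuous.aestronglyMeasurable (by have := kap_cont l; fun_prop)
    · rw [ae_restrict_iff' measurableSet_Ioi]
      filter_upwards with u hu
      have : Real.exp (-d * u) ≤ 1 := by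
        rw [Real.exp_le_one_iff]; nlinarith [mem_Ioi.1 hu]
      rw [Real.norm_of_nonneg (mul_nonneg (Real.exp_pos _).le (kap_nonneg hl _))]
      nlinarith [kap_nonneg hl (u - y)]

lemma P_tendsto {l : ℝ} (hl : 0 < l) (y : ℝ) :
    Tendsto (fun σ : ℝ => ∫ u in Ioi (0:ℝ), Real.exp (-(σ - 1) * u) * kap l (u - y)) (𝓝[>] 1)
     (𝓝 (∫ u in Ioi (-y), kap l u)) := by
  have e : ∫ u in Ioi (-y), kap l u = ∫ u in Ioi 0, kap l (u - y) := by
    rw [← integral_indicator measurableSet_Ioi, ← integral_indicator measurableSet_Ioi,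
      ← integral_sub_right_eq_self ((Ioi (-y)).indicator (kap l)) y]
    congr 1; ext u
    by_cases hu : 0 < u
    · rw [indicator_of_mem, indicator_of_mem] <;> simp [hu]
    · rw [indicator_of_notMem, indicator_of_notMem] <;> simpa using hu
  rw [e]
  have hi : Integrable (fun u => kap l (u - y)) := (kap_integrable hl).comp_sub_right y
  apply tendsto_integral_filter_of_dominated_convergence (fun u => kap l (u - y))
  · filter_upwards with σ
    exact Continuous.aestronglyMeasurable (by have := kap_cont l; fun_prop)
  · filter_upwards [self_mem_nhdsWithin] with σ hσ
    rw [ae_restrict_iff' measurableSet_Ioi]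
    filter_upwards with u hu
    have : Real.exp (-(σ - 1) * u) ≤ 1 := by
      rw [Real.exp_le_one_iff]; nlinarith [mem_Ioi.1 hu, mem_Ioi.1 hσ]
    rw [Real.norm_of_nonneg (mul_nonneg (Real.exp_pos _).le (kap_nonneg hl _))]
    nlinarith [kap_nonneg hl (u - y)]
  · exact hi.integrableOn
  · filter_upwards with u
    refine (Continuous.tendsto' (by fun_prop) _ _ ?_).mono_left nhdsWithin_le_nhds
    simp

lemma P0_tendsto {l : ℝ} (hl : 0 < l) :
    Tendsto (fun y => ∫ u in Ioi (-y), kap l u) atTop (𝓝 (∫ u, kap 1 u)) := by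
  rw [← kap_integral hl]
  exact (aecover_Ioi tendsto_neg_atTop_atBot).integral_tendsto_of_countably_generated (kap_integrable hl)
end

section
open Real MeasureTheory Set Filter Topology

lemma S_one (Λ : ℕ → ℝ) (hΛ : ∀ n, 0 ≤ Λ n)
    (hs : ∀ s : ℂ, 1 < s.re → LSeriesSummable (fun n => (Λ n : ℂ)) s)
    (G : ℂ → ℂ) (hG : ContinuousOn G {s | 1 ≤ s.re})
    (hD : ∀ s : ℂ, 1 < s.re → LSeries (fun n => (Λ n : ℂ)) s = 1 / (s - 1) + G s)
    {l : ℝ} (hl : 0 < l) (y : ℝ) :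
    Summable (fun n : ℕ => Λ n / n * kap l (Real.log n - y)) ∧
    (∑' n : ℕ, Λ n / n * kap l (Real.log n - y) ≤ (∫ u, kap 1 u) + RR G l 1 y) ∧
    (∫ u in Ioi (-y), kap l u) + RR G l 1 y ≤ ∑' n : ℕ, Λ n / n * kap l (Real.log n - y) := by
  have h0 : ∀ n : ℕ, 0 ≤ Λ n / n * kap l (Real.log n - y) := fun n =>
    mul_nonneg (div_nonneg (hΛ n) (by positivity)) (kap_nonneg hl _)
  have hfin : ∀ F : Finset ℕ, ∑ n ∈ F, Λ n / n * kap l (Real.log n - y) ≤ (∫ u, kap 1 u) + RR G l 1 y := by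
    intro F
    have h1 : Tendsto (fun σ : ℝ => ∑ n ∈ F, Λ n * (n : ℝ) ^ (-σ) * kap l (Real.log n - y)) (𝓝[>] 1)
        (𝓝 (∑ n ∈ F, Λ n / n * kap l (Real.log n - y))) := by
      apply tendsto_finsetSum
      intro n _
      apply Tendsto.mul_const
      rw [div_eq_mul_inv]
      apply Tendsto.const_mul
      rcases Nat.eq_zero_or_pos n with rfl | hn
      · have : ∀ᶠ σ : ℝ in 𝓝[>] 1, ((0:ℕ):ℝ)⁻¹ = ((0 : ℕ) : ℝ) ^ (-σ) := by
          filter_upwards [self_mem_nhdsWithin] with σ hσ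
          rw [Nat.cast_zero, Real.zero_rpow (by have := mem_Ioi.1 hσ; linarith)]; simp
        exact tendsto_const_nhds.congr' this
      · have hn' : (0:ℝ) < n := by exact_mod_cast hn
        refine (Continuous.tendsto' (?_) _ _ ?_).mono_left nhdsWithin_le_nhds
        · exact continuous_const.rpow continuous_neg (fun _ => Or.inl hn'.ne')
        · simp [Real.rpow_neg_one]
    have h2 := (RR_tendsto G hG l y).const_add (∫ u, kap 1 u)
    refine le_of_tendsto_of_tendsto h1 h2 ?_
    filter_upwards [self_mem_nhdsWithin] with σ hσ
    have hσ' := mem_Ioi.1 hσ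
    have hi := ident Λ hΛ hs G hG hD hσ' hl y
    refine (sum_le_hasSum F (fun n _ => ?_) hi).trans ?_
    · exact mul_nonneg (mul_nonneg (hΛ n) (by positivity)) (kap_nonneg hl _)
    · gcongr
      exact P_le hl (by linarith) y
  have hsum := summable_of_sum_le h0 hfin
  refine ⟨hsum, hsum.tsum_le_of_sum_le hfin, ?_⟩
  have h2 := (P_tendsto hl y).add (RR_tendsto G hG l y)
  refine le_of_tendsto h2 ?_
  filter_upwards [self_mem_nhdsWithin] with σ hσ
  have hσ' := mem_Ioi.1 hσ
  have hi := ident Λ hΛ hs G hG hD hσ' hl y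
  rw [← hi.tsum_eq]
  refine hi.summable.tsum_le_tsum (fun n => ?_) hsum
  apply mul_le_mul_of_nonneg_right _ (kap_nonneg hl _)
  rw [div_eq_mul_inv]
  apply mul_le_mul_of_nonneg_left _ (hΛ n)
  rcases Nat.eq_zero_or_pos n with rfl | hn
  · rw [Nat.cast_zero, Real.zero_rpow (by linarith)]; simp
  · rw [← Real.rpow_neg_one]
    apply Real.rpow_le_rpow_of_exponent_le (by exact_mod_cast hn) (by linarith)

set_option maxHeartbeats 400000 in
theorem tauber (Λ : ℕ → ℝ) (hΛ : ∀ n, 0 ≤ Λ n)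
    (hs : ∀ s : ℂ, 1 < s.re → LSeriesSummable (fun n => (Λ n : ℂ)) s)
    (G : ℂ → ℂ) (hG : ContinuousOn G {s | 1 ≤ s.re})
    (hD : ∀ s : ℂ, 1 < s.re → LSeries (fun n => (Λ n : ℂ)) s = 1 / (s - 1) + G s)
    {ε : ℝ} (hε : 0 < ε) :
    ∃ c : ℝ, 0 < c ∧ ∃ X₀ : ℝ, ∀ X : ℝ, X₀ ≤ X →
      c ≤ ∑ n ∈ Finset.Icc ⌈X⌉₊ ⌊(1 + ε) * X⌋₊, Λ n / n := by
  obtain ⟨e, he⟩ : ∃ e, e = Real.log (1 + ε) / 2 := ⟨_, rfl⟩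
  have hep : 0 < e := by
    have := Real.log_pos (by linarith : 1 < 1 + ε)
    rw [he]; linarith
  obtain ⟨C, hC, hCu⟩ := kap_tail hep
  set I := ∫ u, kap 1 u with hI
  have hIp : 0 < I := kap_integral_pos
  clear_value I
  -- tail constant
  obtain ⟨l, hl'⟩ : ∃ l, l = 16 * C * (I + 1) / I + 1 := ⟨_, rfl⟩
  have hl : 0 < l := by rw [hl']; positivity
  have e1 : ∀ᶠ y in atTop, RR G 1 1 y < 1 := (RR_RL G hG 1).eventually_lt_const one_pos
  have e1' : ∀ᶠ y in atTop, RR G 1 1 (y - 1) < 1 :=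
    (tendsto_atTop_add_const_right atTop (-1) tendsto_id).eventually e1
  have e2 : ∀ᶠ y in atTop, I / 2 < (∫ u in Ioi (-y), kap l u) + RR G l 1 y := by
    have := (P0_tendsto hl).add (RR_RL G hG l)
    rw [add_zero] at this
    exact this.eventually_const_lt (by rw [← hI]; linarith)
  obtain ⟨Y, hY⟩ := eventually_atTop.1 (e1.and (e1'.and e2))
  refine ⟨I / (2 * l), by positivity, max 1 (Real.exp Y), fun X hX => ?_⟩
  have hX1 : 1 ≤ X := (le_max_left _ _).trans hX
  have hX0 : 0 < X := by linarith
  obtain ⟨y, hy⟩ : ∃ y, y = Real.log X + e := ⟨_, rfl⟩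
  have hyY : Y ≤ y := by
    have : Y ≤ Real.log X := by
      rw [Real.le_log_iff_exp_le hX0]; exact (le_max_right _ _).trans hX
    linarith
  obtain ⟨a1, a2, a3⟩ := hY y hyY
  obtain ⟨s1, u1, _⟩ := S_one Λ hΛ hs G hG hD one_pos y
  obtain ⟨s2, u2, _⟩ := S_one Λ hΛ hs G hG hD one_pos (y - 1)
  obtain ⟨s3, _, l3⟩ := S_one Λ hΛ hs G hG hD hl y
  set W := Finset.Icc ⌈X⌉₊ ⌊(1 + ε) * X⌋₊ with hW
  have hmem : ∀ n : ℕ, n ≠ 0 → n ∉ W → e ≤ |Real.log n - y| := by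
    intro n hn0 hn
    by_contra hcon
    push Not at hcon
    apply hn
    rw [abs_lt] at hcon
    have hnp : (0:ℝ) < n := by positivity
    rw [hW, Finset.mem_Icc, Nat.ceil_le, Nat.le_floor_iff (by positivity)]
    constructor
    · rw [← Real.log_le_log_iff hX0 hnp]; linarith
    · rw [← Real.log_le_log_iff hnp (by positivity), Real.log_mul (by positivity) (by positivity)]
      linarith
  have hle : ∀ n : ℕ, Λ n / n * kap l (Real.log n - y) ≤
      (if n ∈ W then Λ n / n * (l / 2) else 0) + 2 / l * C * (Λ n / n * kap 1 (Real.log n - y) +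
        Λ n / n * kap 1 (Real.log n - (y - 1))) := by
    intro n
    have hn0 : 0 ≤ Λ n / n := div_nonneg (hΛ n) (by positivity)
    have p1 := kap_nonneg one_pos (Real.log n - y)
    have p2 := kap_nonneg one_pos (Real.log n - (y - 1))
    by_cases hn : n ∈ W
    · rw [if_pos hn]
      have := mul_le_mul_of_nonneg_left (kap_le hl (Real.log n - y)) hn0
      have : 0 ≤ 2 / l * C * (Λ n / n * kap 1 (Real.log n - y) +
        Λ n / n * kap 1 (Real.log n - (y - 1))) :=
        mul_nonneg (mul_nonneg (div_pos two_pos hl).le hC.le)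
          (add_nonneg (mul_nonneg hn0 p1) (mul_nonneg hn0 p2))
      linarith
    · rw [if_neg hn, zero_add]
      by_cases hz : n = 0
      · subst hz; simp
      have hm := hmem n hz hn
      have q1 := hCu _ hm
      have hu0 : 0 < (Real.log n - y) ^ 2 := by
        rw [← sq_abs]; have := hep.trans_le hm; positivity
      have q2 : kap l (Real.log n - y) ≤ 2 / l * (1 / (Real.log n - y) ^ 2) := by
        rw [mul_one_div, le_div_iff₀ hu0]; exact kap_mul_sq_le hl _
      have q3 : kap l (Real.log n - y) ≤ 2 / l * (C * (kap 1 (Real.log n - y) + kap 1 (Real.log n - y + 1))) :=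
        q2.trans (mul_le_mul_of_nonneg_left q1 (by positivity))
      rw [show Real.log n - y + 1 = Real.log n - (y - 1) by ring] at q3
      refine (mul_le_mul_of_nonneg_left q3 hn0).trans (le_of_eq (by ring))
  have hW1 : Summable (fun n : ℕ => if n ∈ W then Λ n / n * (l / 2) else 0) :=
    summable_of_finite_support (W.finite_toSet.subset (by intro n; simp; tauto))
  have hW2 : ∑' n : ℕ, (if n ∈ W then Λ n / n * (l / 2) else 0) = (∑ n ∈ W, Λ n / n) * (l / 2) := by
    rw [tsum_eq_sum (s := W) (by intro n hn; simp [hn]), Finset.sum_mul]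
    exact Finset.sum_congr rfl (fun n hn => by simp [hn])
  have key := s3.tsum_le_tsum hle (hW1.add ((s1.add s2).mul_left _))
  rw [hW1.tsum_add ((s1.add s2).mul_left _), tsum_mul_left, s1.tsum_add s2, hW2] at key
  have b : 2 / l * C * (∑' n : ℕ, Λ n / n * kap 1 (Real.log n - y) + ∑' n : ℕ, Λ n / n * kap 1 (Real.log n - (y - 1))) ≤ I / 4 := by
    calc _ ≤ 2 / l * C * ((I + 1) + (I + 1)) := by gcongr <;> linarith
      _ ≤ I / 4 := by
        rw [div_mul_eq_mul_div, div_mul_eq_mul_div, div_le_iff₀ hl, hl']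
        field_simp
        nlinarith
  have k2 : I / 4 ≤ (∑ n ∈ W, Λ n / n) * (l / 2) := by linarith
  rw [div_le_iff₀ (by positivity)]
  linarith
end

section
open Real MeasureTheory Set Filter Topology

lemma order_lim (F : ℂ → ℂ) (s₀ : ℂ) (hF : AnalyticAt ℂ F s₀) (hnz : ¬ ∀ᶠ z in 𝓝 s₀, F z = 0) :
    ∃ k : ℕ, (k = 0 → F s₀ ≠ 0) ∧ (F s₀ ≠ 0 → k = 0) ∧ (∀ᶠ z in 𝓝[≠] s₀, F z ≠ 0) ∧
      Tendsto (fun z => (z - s₀) * (deriv F z / F z)) (𝓝[≠] s₀) (𝓝 (k : ℂ)) := by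
  obtain ⟨k, g, hg, hg0, hk⟩ := hF.exists_eventuallyEq_pow_smul_nonzero_iff.2 hnz
  have hgne : ∀ᶠ z in 𝓝 s₀, g z ≠ 0 := hg.continuousAt.eventually_ne hg0
  have hval : F s₀ = (s₀ - s₀) ^ k • g s₀ := hk.self_of_nhds
  refine ⟨k, ?_, ?_, ?_, ?_⟩
  · rintro rfl; rw [hval]; simpa using hg0
  · intro h; by_contra hk0; apply h; rw [hval]; simp [hk0]
  · filter_upwards [hk.filter_mono nhdsWithin_le_nhds, hgne.filter_mono nhdsWithin_le_nhds,
      self_mem_nhdsWithin] with z h1 h2 h3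
    rw [h1]
    exact smul_ne_zero (pow_ne_zero _ (sub_ne_zero.2 h3)) h2
  · have hT : Tendsto (fun z => (k : ℂ) + (z - s₀) * (deriv g z / g z)) (𝓝[≠] s₀) (𝓝 (k : ℂ)) := by
      have : ContinuousAt (fun z => (k : ℂ) + (z - s₀) * (deriv g z / g z)) s₀ := by
        apply ContinuousAt.add continuousAt_const
        apply ContinuousAt.mul (by fun_prop)
        exact hg.deriv.continuousAt.div hg.continuousAt hg0
      have h := this.tendsto.mono_left (nhdsWithin_le_nhds (s := {s₀}ᶜ))
      simpa using h
    refine hT.congr' ?_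
    have hk2 := hk.eventually_nhds
    filter_upwards [hk2.filter_mono nhdsWithin_le_nhds, hgne.filter_mono nhdsWithin_le_nhds,
      self_mem_nhdsWithin, hg.eventually_analyticAt.filter_mono nhdsWithin_le_nhds] with z h1 h2 h3 h4
    have hz : z - s₀ ≠ 0 := sub_ne_zero.2 h3
    have e : F =ᶠ[𝓝 z] fun z => (z - s₀) ^ k * g z := by
      filter_upwards [h1] with w hw; simpa using hw
    rw [e.deriv_eq, e.self_of_nhds]
    have hd : HasDerivAt (fun z => (z - s₀) ^ k * g z)
        ((k * (z - s₀) ^ (k - 1) * 1) * g z + (z - s₀) ^ k * deriv g z) z := by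
      apply HasDerivAt.mul
      · exact ((hasDerivAt_id z).sub_const s₀).pow k
      · exact h4.differentiableAt.hasDerivAt
    rw [hd.deriv]
    rcases Nat.eq_zero_or_pos k with rfl | hkp
    · simp
    · obtain ⟨j, rfl⟩ : ∃ j, k = j + 1 := ⟨k - 1, by omega⟩
      simp only [Nat.add_sub_cancel]
      field_simp
      ring

theorem nonvan (Λ : ℕ → ℝ) (hΛ : ∀ n, 0 ≤ Λ n)
    (hs : ∀ s : ℂ, 1 < s.re → LSeriesSummable (fun n => (Λ n : ℂ)) s)
    (η : ℝ) (hη : 0 < η) (F : ℂ → ℂ) (hF : DifferentiableOn ℂ F {s | 1 - η < s.re})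
    (hF1 : F 1 ≠ 0)
    (hD : ∀ s : ℂ, 1 < s.re → deriv F s = F s * (1 / (s - 1) - LSeries (fun n => (Λ n : ℂ)) s)) :
    ∃ G : ℂ → ℂ, ContinuousOn G {s | 1 ≤ s.re} ∧
     ∀ s : ℂ, 1 < s.re → LSeries (fun n => (Λ n : ℂ)) s = 1 / (s - 1) + G s := by
  set U := {s : ℂ | 1 - η < s.re} with hU
  have hUo : IsOpen U := isOpen_lt continuous_const Complex.continuous_re
  have hUc : IsPreconnected U := (convex_halfSpace_re_gt (1 - η)).isPreconnected
  have hFa : AnalyticOnNhd ℂ F U := hF.analyticOnNhd hUo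
  have h1U : (1 : ℂ) ∈ U := by simp [hU, hη]
  have hnz : ∀ s ∈ U, ¬ ∀ᶠ z in 𝓝 s, F z = 0 := by
    intro s hsU h
    exact hF1 (hFa.eqOn_zero_of_preconnected_of_eventuallyEq_zero hUc hsU h h1U)
  have hsub : ∀ s : ℂ, 1 ≤ s.re → s ∈ U := fun s h => by simp only [hU, mem_setOf_eq]; linarith
  set D := fun s => LSeries (fun n => (Λ n : ℂ)) s with hDdef
  -- path limit
  have path : ∀ t : ℝ, Tendsto (fun σ : ℝ => (σ : ℂ) + t * Complex.I) (𝓝[>] 1) (𝓝[≠] (1 + t * Complex.I)) := by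
    intro t
    apply tendsto_nhdsWithin_of_tendsto_nhds_of_eventually_within
    · refine (Continuous.tendsto' (by fun_prop) _ _ (by simp)).mono_left nhdsWithin_le_nhds
    · filter_upwards [self_mem_nhdsWithin] with σ hσ h
      have := congrArg Complex.re h
      simp at this
      exact (mem_Ioi.1 hσ).ne' this
  have lim : ∀ t : ℝ, ∃ k : ℕ, (k = 0 → F (1 + t * Complex.I) ≠ 0) ∧ (F (1 + t * Complex.I) ≠ 0 → k = 0) ∧
      Tendsto (fun σ : ℝ => (σ - 1) * (D (σ + t * Complex.I)).re) (𝓝[>] 1)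
        (𝓝 ((if t = 0 then 1 else 0) - k)) := by
    intro t
    obtain ⟨k, h1, h2, h3, h4⟩ := order_lim F (1 + t * Complex.I) (hFa _ (hsub _ (by simp))) (hnz _ (hsub _ (by simp)))
    refine ⟨k, h1, h2, ?_⟩
    have l1 := h4.comp (path t)
    have l2 : Tendsto (fun σ : ℝ => ((σ : ℂ) - 1) * (1 / (σ + t * Complex.I - 1))) (𝓝[>] 1)
        (𝓝 (if t = 0 then 1 else 0)) := by
      by_cases ht : t = 0
      · subst ht
        simp only [if_true]
        refine tendsto_const_nhds.congr' ?_
        filter_upwards [self_mem_nhdsWithin] with σ hσ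
        have : (σ : ℂ) - 1 ≠ 0 := by
          rw [sub_ne_zero]; exact_mod_cast (mem_Ioi.1 hσ).ne'
        simp [this]
      · rw [if_neg ht]
        have : ContinuousAt (fun σ : ℝ => ((σ : ℂ) - 1) * (1 / (σ + t * Complex.I - 1))) 1 := by
          apply ContinuousAt.mul (by fun_prop)
          apply ContinuousAt.div (by fun_prop) (by fun_prop)
          simp [ht]
        have h := this.tendsto.mono_left (nhdsWithin_le_nhds (s := Ioi 1))
        simpa using h
    have l3 := (Complex.continuous_re.tendsto _).comp (l2.sub l1)
    have e : ((if t = 0 then (1:ℂ) else 0) - k).re = (if t = 0 then 1 else 0) - k := by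
      split_ifs <;> simp
    rw [e] at l3
    refine l3.congr' ?_
    filter_upwards [self_mem_nhdsWithin, (path t).eventually h3] with σ hσ hne
    have hσ' := mem_Ioi.1 hσ
    simp only [Function.comp_apply]
    rw [hD _ (by simpa using hσ'), mul_div_cancel_left₀ _ hne,
      show (σ : ℂ) + t * Complex.I - (1 + t * Complex.I) = ((σ - 1 : ℝ) : ℂ) by push_cast; ring,
      show (σ : ℂ) - 1 = ((σ - 1 : ℝ) : ℂ) by push_cast; ring, ← mul_sub, Complex.re_ofReal_mul]
    congr 2
    ring
  have pos : ∀ t σ : ℝ, 1 < σ → 0 ≤ 3 * (D (σ + (0:ℝ) * Complex.I)).re + 4 * (D (σ + t * Complex.I)).re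
      + (D (σ + (2 * t : ℝ) * Complex.I)).re := by
    intro t σ hσ
    have hh : ∀ t : ℝ, HasSum (fun n : ℕ => Λ n * (n : ℝ) ^ (-σ) * Real.cos (t * Real.log n)) (D (σ + t * Complex.I)).re := by
      intro t
      have h := Complex.reCLM.hasSum (hs (σ + t * Complex.I) (by simpa using hσ)).LSeriesHasSum
      have e : (fun n : ℕ => Λ n * (n : ℝ) ^ (-σ) * Real.cos (t * Real.log n)) = 
          fun n => Complex.reCLM (LSeries.term (fun n => (Λ n : ℂ)) (σ + t * Complex.I) n) := by
        ext n
        have := term_re Λ σ t 0 hσ n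
        simpa using this.symm
      rw [e]; exact h
    have := (((hh 0).mul_left 3).add ((hh t).mul_left 4)).add (hh (2 * t))
    refine this.nonneg fun n => ?_
    have h0 : 0 ≤ Λ n * (n : ℝ) ^ (-σ) := mul_nonneg (hΛ n) (by positivity)
    have hc : Real.cos (2 * t * Real.log n) = 2 * Real.cos (t * Real.log n) ^ 2 - 1 := by
      rw [← Real.cos_two_mul]; ring_nf
    rw [hc]
    simp only [zero_mul, Real.cos_zero]
    have : 0 ≤ (Λ n * (n : ℝ) ^ (-σ)) * (2 * (1 + Real.cos (t * Real.log n)) ^ 2) := by positivity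
    nlinarith
  have hne1 : ∀ t : ℝ, F (1 + t * Complex.I) ≠ 0 := by
    intro t
    by_cases ht : t = 0
    · subst ht; simpa using hF1
    obtain ⟨k0, a1, a2, a3⟩ := lim 0
    obtain ⟨k1, b1, b2, b3⟩ := lim t
    obtain ⟨k2, c1, c2, c3⟩ := lim (2 * t)
    have hk0 : k0 = 0 := a2 (by simpa using hF1)
    rw [if_pos rfl, hk0] at a3
    rw [if_neg ht] at b3
    rw [if_neg (by simpa using ht)] at c3
    have hlim := ((a3.const_mul 3).add (b3.const_mul 4)).add c3
    have h0 : (0:ℝ) ≤ 3 * (1 - (0:ℕ)) + 4 * (0 - k1) + (0 - k2) := by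
      refine ge_of_tendsto hlim ?_
      filter_upwards [self_mem_nhdsWithin] with σ hσ
      have hσ' := mem_Ioi.1 hσ
      have := mul_nonneg (by linarith : 0 ≤ σ - 1) (pos t σ hσ')
      linarith
    apply b1
    by_contra hk
    have : (1:ℝ) ≤ k1 := by exact_mod_cast Nat.one_le_iff_ne_zero.2 hk
    have h2 : (0:ℝ) ≤ k2 := by positivity
    push_cast at h0
    linarith
  have hne2 : ∀ s : ℂ, 1 < s.re → F s ≠ 0 := by
    intro s hsr
    obtain ⟨k, h1, h2, h3, h4⟩ := order_lim F s (hFa _ (hsub _ hsr.le)) (hnz _ (hsub _ hsr.le))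
    apply h1
    have hev : ∀ᶠ z in 𝓝[≠] s, 1 < z.re :=
      ((isOpen_lt continuous_const Complex.continuous_re).mem_nhds hsr |> fun h => nhdsWithin_le_nhds h)
    have hDc : ContinuousAt D s := by
      apply DifferentiableAt.continuousAt (𝕜 := ℂ)
      apply (LSeries_hasDerivAt _).differentiableAt
      have hab : LSeries.abscissaOfAbsConv (fun n => (Λ n : ℂ)) ≤ 1 :=
        LSeries.abscissaOfAbsConv_le_of_forall_lt_LSeriesSummable' (fun y hy => hs y (by simpa using (by exact_mod_cast hy : (1:ℝ) < y)))
      refine lt_of_le_of_lt hab (by exact_mod_cast hsr)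
    have hs1 : s - 1 ≠ 0 := by
      intro h; have := congrArg Complex.re h; simp at this; linarith
    have : Tendsto (fun z => (z - s) * (1 / (z - 1) - D z)) (𝓝[≠] s) (𝓝 0) := by
      have hc : ContinuousAt (fun z => (z - s) * (1 / (z - 1) - D z)) s := by
        apply ContinuousAt.mul (by fun_prop)
        apply ContinuousAt.sub _ hDc
        exact ContinuousAt.div (by fun_prop) (by fun_prop) hs1
      have h := hc.tendsto.mono_left (nhdsWithin_le_nhds (s := {s}ᶜ))
      simpa using h
    have h5 : Tendsto (fun z => (z - s) * (deriv F z / F z)) (𝓝[≠] s) (𝓝 0) := by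
      refine this.congr' ?_
      filter_upwards [hev, h3] with z hz1 hz2
      rw [hD z hz1, mul_div_cancel_left₀ _ hz2]
    exact_mod_cast tendsto_nhds_unique h4 h5
  have hne : ∀ s : ℂ, 1 ≤ s.re → F s ≠ 0 := by
    intro s hsr
    rcases hsr.lt_or_eq with h | h
    · exact hne2 s h
    · have := hne1 s.im
      rwa [show (1 : ℂ) + s.im * Complex.I = s by apply Complex.ext <;> simp [← h]] at this
  refine ⟨fun s => - (deriv F s / F s), ?_, ?_⟩
  · intro s hsr
    have ha := hFa s (hsub s hsr)
    exact (ha.deriv.continuousAt.div ha.continuousAt (hne s hsr)).neg.continuousWithinAt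
  · intro s hsr
    show LSeries (fun n => (Λ n : ℂ)) s = 1 / (s - 1) + - (deriv F s / F s)
    rw [hD s hsr, mul_div_cancel_left₀ _ (hne2 s hsr)]
    ring
end

section
open NumberField Ideal UniqueFactorizationMonoid

section P6
variable (L : Type*) [Field L] [NumberField L]

def PP (n : ℕ) : Set (Ideal (𝓞 L) × ℕ) :=
  {q | q.1.IsPrime ∧ q.1 ≠ ⊥ ∧ absNorm q.1 ^ (q.2 + 1) = n}

variable {L}
lemma two_le_absNorm {P : Ideal (𝓞 L)} (h1 : P.IsPrime) (h2 : P ≠ ⊥) : 2 ≤ absNorm P := by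
  have h0 : absNorm P ≠ 0 := by simpa [absNorm_eq_zero_iff] using h2
  have h1 : absNorm P ≠ 1 := by
    intro h; exact h1.ne_top (absNorm_eq_one_iff.1 h)
  omega

variable (L) in
lemma PP_finite (n : ℕ) : (PP L n).Finite := by
  apply ((finite_setOfPred_absNorm_le (S := 𝓞 L) n).prod (Set.finite_Iic n)).subset
  rintro ⟨P, k⟩ ⟨h1, h2, h3⟩
  have := two_le_absNorm h1 h2
  simp only at h3 this
  constructor
  · show absNorm P ≤ n
    rw [← h3]; exact Nat.le_self_pow (by omega) _
  · show k ≤ n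
    have : k + 1 < absNorm P ^ (k+1) := Nat.lt_pow_self (by omega)
    omega

variable (L) in
noncomputable def LamL (n : ℕ) : ℝ := ∑ q ∈ (PP_finite L n).toFinset, Real.log (absNorm q.1)

lemma LamL_nonneg (n : ℕ) : 0 ≤ LamL L n :=
  Finset.sum_nonneg fun _ _ => Real.log_natCast_nonneg _

lemma log_norm (I : Ideal (𝓞 L)) (hI : I ≠ ⊥) (T : Finset (Ideal (𝓞 L) × ℕ))
    (hT : ∀ q, q ∈ T ↔ q.1.IsPrime ∧ q.1 ≠ ⊥ ∧ q.1 ^ (q.2 + 1) ∣ I) :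
    Real.log (absNorm I) = ∑ q ∈ T, Real.log (absNorm q.1) := by
  classical
  rw [Finset.sum_finset_product T (normalizedFactors I).toFinset
    (fun P => Finset.range ((normalizedFactors I).count P))]
  · simp only [Finset.sum_const, Finset.card_range]
    rw [← Finset.sum_multiset_map_count]
    conv_lhs => rw [← Ideal.prod_normalizedFactors_eq_self hI]
    have : ∀ s : Multiset (Ideal (𝓞 L)), (∀ P ∈ s, P ≠ ⊥) →
        Real.log (absNorm s.prod) = (s.map fun P => Real.log (absNorm P)).sum := by
      intro s
      induction s using Multiset.induction_on with
      | empty => simp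
      | cons P s ih =>
        intro h
        have h1 : (absNorm P : ℝ) ≠ 0 := by
          have := h P (by simp)
          simpa [absNorm_eq_zero_iff] using this
        have h2 : (absNorm s.prod : ℝ) ≠ 0 := by
          have : s.prod ≠ 0 := by
            rw [Ne, Multiset.prod_eq_zero_iff]
            intro h0
            exact h 0 (Multiset.mem_cons_of_mem h0) rfl
          simpa [absNorm_eq_zero_iff] using this
        simp only [Multiset.prod_cons, map_mul, Multiset.map_cons, Multiset.sum_cons, Nat.cast_mul]
        rw [Real.log_mul h1 h2, ih (fun Q hQ => h Q (by simp [hQ]))]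
    apply this
    intro P hP
    exact (prime_of_normalized_factor P hP).ne_zero
  · rintro ⟨P, k⟩
    rw [hT]
    simp only [Multiset.mem_toFinset, Finset.mem_range]
    constructor
    · rintro ⟨h1, h2, h3⟩
      have hirr : Irreducible P := (Ideal.prime_of_isPrime h2 h1).irreducible
      have h4 : k + 1 ≤ (normalizedFactors I).count P := by
        have := emultiplicity_eq_count_normalizedFactors hirr hI
        rw [pow_dvd_iff_le_emultiplicity, this, normalize_eq] at h3
        exact_mod_cast h3
      exact ⟨Multiset.count_pos.1 (by omega), by omega⟩
    · rintro ⟨h1, h2⟩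
      have hp := prime_of_normalized_factor P h1
      refine ⟨Ideal.isPrime_of_prime hp, hp.ne_zero, ?_⟩
      have := emultiplicity_eq_count_normalizedFactors hp.irreducible hI
      rw [pow_dvd_iff_le_emultiplicity, this, normalize_eq]
      exact_mod_cast h2

variable (L) in
noncomputable def aL (n : ℕ) : ℕ := Nat.card {I : Ideal (𝓞 L) // absNorm I = n}

lemma card_dvd (J : Ideal (𝓞 L)) (hJ : J ≠ ⊥) (n : ℕ) :
    Nat.card {I : Ideal (𝓞 L) // absNorm I = absNorm J * n ∧ J ∣ I} = aL L n := by
  have h0 : absNorm J ≠ 0 := by simpa [absNorm_eq_zero_iff] using hJ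
  symm
  refine Nat.card_congr (Equiv.ofBijective
    (fun I => ⟨J * I.1, by simp [I.2], Dvd.intro _ rfl⟩) ⟨?_, ?_⟩)
  · rintro ⟨I, hI⟩ ⟨I', hI'⟩ h
    simp only [Subtype.mk.injEq] at h ⊢
    exact mul_left_cancel₀ (a := J) hJ h
  · rintro ⟨I, hI, ⟨I', rfl⟩⟩
    refine ⟨⟨I', ?_⟩, rfl⟩
    simp only [map_mul] at hI
    exact Nat.eq_of_mul_eq_mul_left (by omega) hI

lemma conv_real (n : ℕ) (hn : n ≠ 0) :
    Real.log n * aL L n = ∑ p ∈ n.divisorsAntidiagonal, LamL L p.1 * aL L p.2 := by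
  classical
  have hS := finite_setOfPred_absNorm_eq (S := 𝓞 L) n
  set S := hS.toFinset with hSdef
  have haS : (aL L n : ℝ) = S.card := by
    have := Nat.card_eq_card_finite_toFinset hS
    unfold aL; rw [hSdef, ← this]; rfl
  let T : Finset (Ideal (𝓞 L) × ℕ) := n.divisors.biUnion fun d => (PP_finite L d).toFinset
  have h1 : ∀ I ∈ S, Real.log n = ∑ q ∈ T.filter (fun q => q.1 ^ (q.2+1) ∣ I),
      Real.log (absNorm q.1) := by
    intro I hI
    have hI' : absNorm I = n := by simpa [hSdef] using hI
    have hI0 : I ≠ ⊥ := by rintro rfl; simp at hI'; omega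
    rw [← log_norm I hI0, hI']
    rintro ⟨P, k⟩
    simp only [T, Finset.mem_filter, Finset.mem_biUnion, Set.Finite.mem_toFinset, PP,
      Nat.mem_divisors]
    constructor
    · rintro ⟨⟨d, hd, h1, h2, h3⟩, h4⟩
      exact ⟨h1, h2, h4⟩
    · rintro ⟨h1, h2, h3⟩
      refine ⟨⟨_, ⟨?_, hn⟩, h1, h2, rfl⟩, h3⟩
      have := map_dvd absNorm h3
      simpa [hI'] using this
  have h2 : Real.log n * aL L n = ∑ I ∈ S, ∑ q ∈ T with q.1 ^ (q.2+1) ∣ I,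
      Real.log (absNorm q.1) := by
    rw [← Finset.sum_congr rfl h1, haS]; simp [mul_comm]
  rw [h2]
  simp_rw [Finset.sum_filter]
  rw [Finset.sum_comm]
  rw [Finset.sum_biUnion]
  · rw [Nat.sum_divisorsAntidiagonal (f := fun x y => LamL L x * aL L y)]
    refine Finset.sum_congr rfl fun d hd => ?_
    rw [LamL, Finset.sum_mul]
    refine Finset.sum_congr rfl fun q hq => ?_
    rw [← Finset.sum_filter, Finset.sum_const, nsmul_eq_mul, mul_comm]
    congr 1
    have hq' : q ∈ PP L d := by simpa using hq
    obtain ⟨q1, q2, q3⟩ := hq'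
    have hJ : q.1 ^ (q.2+1) ≠ ⊥ := pow_ne_zero _ q2
    have hN : absNorm (q.1 ^ (q.2+1)) = d := by simp [q3]
    rw [← card_dvd _ hJ, hN, Nat.mul_div_cancel' (Nat.dvd_of_mem_divisors hd)]
    rw [Nat.subtype_card (S.filter (fun I => q.1 ^ (q.2+1) ∣ I))]
    intro I; simp [hSdef]
  · intro d _ d' _ hdd
    rw [Function.onFun, Finset.disjoint_left]
    intro q h h'
    have h : q ∈ PP L d := by simpa using h
    have h' : q ∈ PP L d' := by simpa using h'
    exact hdd (h.2.2.symm.trans h'.2.2)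

open ArithmeticFunction in
lemma LamL_le (n : ℕ) : LamL L n ≤ Module.finrank ℚ L * vonMangoldt n := by
  classical
  by_cases he : (PP_finite L n).toFinset = ∅
  · rw [LamL, he]; simp; positivity
  obtain ⟨⟨P0, k0⟩, h0⟩ := Finset.nonempty_iff_ne_empty.2 he
  have h0 : (P0, k0) ∈ PP L n := by simpa using h0
  have key : ∀ P : Ideal (𝓞 L), P.IsPrime → P ≠ ⊥ → ∃ p f : ℕ, p.Prime ∧ 0 < f ∧ absNorm P = p ^ f ∧
      P ∣ Ideal.span {(p : 𝓞 L)} := by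
    intro P h1 h2
    have : NeZero P := ⟨h2⟩
    have hp := Nat.absNorm_under_prime P
    have hlo : P.LiesOver (Ideal.span {((absNorm (under ℤ P) : ℕ) : ℤ)}) := by
      constructor
      rw [Int.ideal_span_absNorm_eq_self]
    have h3 := Ideal.absNorm_eq_pow_inertiaDeg' P hp
    refine ⟨_, _, hp, Nat.pos_of_ne_zero ?_, h3, ?_⟩
    · intro h0
      rw [h0] at h3
      have := two_le_absNorm h1 h2
      rw [pow_zero] at h3; omega
    · rw [Ideal.dvd_span_singleton]
      have := Int.absNorm_under_mem P
      exact_mod_cast this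
  obtain ⟨p, f, hp, hf, hP0, -⟩ := key P0 h0.1 h0.2.1
  have hn : n = p ^ (f * (k0 + 1)) := by rw [← h0.2.2, hP0, pow_mul]
  have hpp : (Ideal.span {(p : 𝓞 L)}) ≠ ⊥ := by
    simp [hp.ne_zero]
  have hfin : ({q | q.1.IsPrime ∧ q.1 ≠ ⊥ ∧ q.1 ^ (q.2+1) ∣ Ideal.span {(p : 𝓞 L)}} :
      Set (Ideal (𝓞 L) × ℕ)).Finite := by
    apply (Finset.finite_toSet (((absNorm (Ideal.span {(p : 𝓞 L)})).divisors).biUnion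
      fun d => (PP_finite L d).toFinset)).subset
    rintro ⟨P, k⟩ ⟨h1, h2, h3⟩
    simp only [Finset.coe_biUnion, Set.mem_iUnion, Finset.mem_coe, Nat.mem_divisors,
      Set.Finite.mem_toFinset]
    refine ⟨_, ⟨?_, ?_⟩, h1, h2, rfl⟩
    · have := map_dvd absNorm h3
      simpa using this
    · simpa [absNorm_eq_zero_iff] using hp.ne_zero
  have hlog := log_norm (Ideal.span {(p : 𝓞 L)}) hpp hfin.toFinset (fun q => by simp)
  have hnorm : Real.log (absNorm (Ideal.span {(p : 𝓞 L)})) = Module.finrank ℚ L * Real.log p := by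
    have : absNorm (Ideal.span {(p : 𝓞 L)}) = p ^ Module.finrank ℚ L := by
      rw [absNorm_span_natCast, RingOfIntegers.rank]
    rw [this]; push_cast; rw [Real.log_pow]
  have hL : vonMangoldt n = Real.log p := by
    rw [hn, vonMangoldt_apply_pow (by positivity), vonMangoldt_apply_prime hp]
  rw [hL, ← hnorm, hlog, LamL]
  have hinj : Set.InjOn (fun q : Ideal (𝓞 L) × ℕ => (q.1, 0)) ((PP_finite L n).toFinset : Set (Ideal (𝓞 L) × ℕ)) := by
    rintro ⟨P, k⟩ h ⟨P', k'⟩ h' hh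
    simp only [Prod.mk.injEq, and_true] at hh
    subst hh
    have h : (P, k) ∈ PP L n := by simpa using h
    have h' : (P, k') ∈ PP L n := by simpa using h'
    have := h.2.2.trans h'.2.2.symm
    have := Nat.pow_right_injective (two_le_absNorm h.1 h.2.1) this
    simp only [Prod.mk.injEq, true_and]
    omega
  rw [← Finset.sum_image (f := fun q : Ideal (𝓞 L) × ℕ => Real.log (absNorm q.1)) hinj]
  apply Finset.sum_le_sum_of_subset_of_nonneg
  · intro q hq
    obtain ⟨⟨P, k⟩, h, rfl⟩ := Finset.mem_image.1 hq
    have h : (P, k) ∈ PP L n := by simpa using h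
    obtain ⟨p', f', hp', hf', hP, hdvd⟩ := key P h.1 h.2.1
    have e : p' = p := by
      have h3 := h.2.2
      simp only [hP] at h3
      rw [hn, ← pow_mul] at h3
      have : p' ∣ p ^ (f * (k0 + 1)) := by
        rw [← h3]; exact dvd_pow_self _ (by positivity)
      exact (Nat.prime_dvd_prime_iff_eq hp' hp).1 (hp'.dvd_of_dvd_pow this)
    subst e
    simp only [Set.Finite.mem_toFinset]
    exact ⟨h.1, h.2.1, by simpa using hdvd⟩
  · intro _ _ _; exact Real.log_natCast_nonneg _

lemma LamL_summable {s : ℂ} (hs : 1 < s.re) : LSeriesSummable (fun n => (LamL L n : ℂ)) s := by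
  have h := (ArithmeticFunction.LSeriesSummable_vonMangoldt hs).norm.mul_left (Module.finrank ℚ L : ℝ)
  refine Summable.of_norm_bounded h fun n => ?_
  rcases eq_or_ne n 0 with rfl | hn
  · simp
  rw [LSeries.term_of_ne_zero hn, LSeries.term_of_ne_zero hn, norm_div, norm_div, ← mul_div_assoc]
  gcongr
  rw [Complex.norm_real, Complex.norm_real, Real.norm_of_nonneg (LamL_nonneg n),
    Real.norm_of_nonneg ArithmeticFunction.vonMangoldt_nonneg]
  exact LamL_le n

lemma zeta_summable {s : ℂ} (hs : 1 < s.re) : LSeriesSummable (fun n => (aL L n : ℂ)) s := by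
  have hT : Filter.Tendsto (fun n : ℕ => (∑ k ∈ Finset.Icc 1 n, (aL L k : ℝ)) / n) Filter.atTop
      (nhds (dedekindZeta_residue L)) := by
    refine ((NumberField.Ideal.tendsto_norm_le_div_atTop₀ L).comp
      tendsto_natCast_atTop_atTop).congr fun n ↦ ?_
    simp only [Function.comp_apply, Nat.cast_le, ← Nat.cast_sum, aL]
    congr
    rw [← add_left_inj 1, ← card_norm_le_eq_card_norm_le_add_one,
      show Finset.Icc 1 n = Finset.Ioc 0 n from Finset.Icc_succ_left_eq_Ioc _ _,
      show 1 = Nat.card {I : Ideal (𝓞 L) // absNorm I = 0} by simp [Ideal.absNorm_eq_zero_iff],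
      Finset.sum_Ioc_add_eq_sum_Icc (n.zero_le),
      ← Finset.card_preimage_eq_sum_card_image_eq (fun k _ ↦ finite_setOfPred_absNorm_eq k)]
    simp [Set.coe_eq_subtype]
  have hO : (fun n : ℕ => ∑ k ∈ Finset.Icc 1 n, (aL L k : ℝ)) =O[Filter.atTop]
      fun n : ℕ => (n : ℝ) ^ (1 : ℝ) := by
    simp only [Real.rpow_one]
    refine Asymptotics.isBigO_of_div_tendsto_nhds ?_ _ hT
    filter_upwards [Filter.eventually_gt_atTop 0] with n hn h0
    simp at h0; omega
  have := LSeriesSummable_of_sum_norm_bigO_and_nonneg hO (fun n => Nat.cast_nonneg _) zero_le_one hs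
  exact_mod_cast this

lemma zeta_deriv {s : ℂ} (hs : 1 < s.re) : HasDerivAt (dedekindZeta L)
    (- (LSeries (fun n => (LamL L n : ℂ)) s * dedekindZeta L s)) s := by
  have hab : LSeries.abscissaOfAbsConv (fun n => (aL L n : ℂ)) ≤ 1 :=
    LSeries.abscissaOfAbsConv_le_of_forall_lt_LSeriesSummable' (fun y hy =>
      zeta_summable (by simpa using (by exact_mod_cast hy : (1:ℝ) < y)))
  have h := LSeries_hasDerivAt (f := fun n => (aL L n : ℂ)) (s := s)
    (lt_of_le_of_lt hab (by exact_mod_cast hs))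
  convert h using 1
  congr 1
  rw [show dedekindZeta L s = LSeries (fun n => (aL L n : ℂ)) s from rfl,
    ← LSeries_convolution' (LamL_summable hs) (zeta_summable hs)]
  congr 1
  refine LSeries_congr (fun {n} hn => ?_) s
  rw [LSeries.convolution_def]
  have := conv_real (L := L) n hn
  simp only [LSeries.logMul]
  rw [← Complex.natCast_log]
  exact_mod_cast this.symm
end P6
end

section
open MeasureTheory Module
open scoped Pointwise

section P1
variable {E ι : Type*} [NormedAddCommGroup E] [NormedSpace ℝ E] [FiniteDimensional ℝ E]
  [MeasurableSpace E] [BorelSpace E] [Finite ι]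

lemma hasSum_fd (b : Basis ι ℝ E) (μ : Measure E) [μ.IsAddHaarMeasure] (f : E → ℝ)
    (hf : Integrable f μ) :
    HasSum (fun l : Submodule.span ℤ (Set.range b) =>
      ∫ x in ZSpan.fundamentalDomain b, f ((l : E) + x) ∂μ) (∫ x, f x ∂μ) := by
  have hfd := ZSpan.isAddFundamentalDomain b μ
  have : VAddInvariantMeasure (Submodule.span ℤ (Set.range b)) E μ :=
    inferInstanceAs <| VAddInvariantMeasure (Submodule.span ℤ (Set.range b)).toAddSubgroup E μ
  have : Countable (Submodule.span ℤ (Set.range b)) := inferInstance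
  have : MeasurableVAdd (Submodule.span ℤ (Set.range b)) E :=
    inferInstanceAs <| MeasurableVAdd (Submodule.span ℤ (Set.range b)).toAddSubgroup E
  have h1 := hfd.sum_restrict
  have h2 : HasSum (fun l : Submodule.span ℤ (Set.range b) =>
      ∫ x in l +ᵥ ZSpan.fundamentalDomain b, f x ∂μ) (∫ x, f x ∂μ) := by
    have := hasSum_integral_measure (f := f)
      (μ := fun l : Submodule.span ℤ (Set.range b) => μ.restrict (l +ᵥ ZSpan.fundamentalDomain b))
      (by rw [h1]; exact hf)
    rwa [h1] at this
  convert h2 using 2 with l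
  exact ((measurePreserving_vadd l μ).setIntegral_image_emb
    (measurableEmbedding_const_vadd _) _ _).symm

lemma lattice_sum (b : Basis ι ℝ E) (g : E → ℝ) (K R : ℝ)
    (hK : ∀ x y, |g x - g y| ≤ K * ‖x - y‖) (hR : ∀ x, R < ‖x‖ → g x = 0) :
    ∃ c C : ℝ, ∀ t : ℝ, 0 < t → t ≤ 1 →
      Summable (fun l : Submodule.span ℤ (Set.range b) => g (t • (l : E))) ∧
      |t ^ (finrank ℝ E) * ∑' l : Submodule.span ℤ (Set.range b), g (t • (l : E)) - c| ≤ C * t := by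
  classical
  let μ : Measure E := Measure.addHaar
  set D := ZSpan.fundamentalDomain b with hD
  have hDb : Bornology.IsBounded D := ZSpan.fundamentalDomain_isBounded b
  obtain ⟨B, hB⟩ := hDb.exists_norm_le
  have hB0 : 0 ≤ B := by
    have : (0 : E) ∈ D := by simp [hD]
    simpa using hB 0 this
  have hDfin : μ D ≠ ⊤ := hDb.measure_lt_top.ne
  have hD0 : μ D ≠ 0 := ZSpan.measure_fundamentalDomain_ne_zero b
  set V := μ.real D with hV
  have hV0 : 0 < V := ENNReal.toReal_pos hD0 hDfin
  have hK' : ∀ x y, |g x - g y| ≤ |K| * ‖x - y‖ := fun x y =>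
    (hK x y).trans (by gcongr; exact le_abs_self K)
  have hgc : Continuous g := by
    have : LipschitzWith (Real.toNNReal |K|) g := by
      apply LipschitzWith.of_dist_le_mul
      intro x y
      rw [Real.dist_eq, dist_eq_norm, Real.coe_toNNReal _ (abs_nonneg _)]
      exact hK' x y
    exact this.continuous
  set r := |R| + B + 1 with hr
  have hr0 : 0 < r := by positivity
  have hgcs : HasCompactSupport g := by
    apply HasCompactSupport.of_support_subset_isCompact (isCompact_closedBall (0:E) r)
    intro x hx
    by_contra h
    apply hx
    apply hR
    rw [mem_closedBall_zero_iff, not_le] at h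
    have := le_abs_self R
    linarith
  have hgint : Integrable g μ := hgc.integrable_of_hasCompactSupport hgcs
  set S := Metric.closedBall (0:E) r
  have hSint : Integrable (S.indicator (fun _ => (1:ℝ))) μ :=
    (integrable_indicator_iff Metric.isClosed_closedBall.measurableSet).2
      (integrableOn_const (isCompact_closedBall _ _).measure_lt_top.ne)
  set n := finrank ℝ E
  refine ⟨(∫ x, g x ∂μ) / V, |K| * B * (∫ x, S.indicator (fun _ => (1:ℝ)) x ∂μ) / V,
    fun t ht ht1 => ?_⟩
  have s1 := hasSum_fd b μ (fun x => g (t • x)) (hgint.comp_smul ht.ne')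
  have s2 := hasSum_fd b μ (fun x => S.indicator (fun _ => (1:ℝ)) (t • x)) (hSint.comp_smul ht.ne')
  rw [← hD] at s1 s2
  have e1 : ∫ x, g (t • x) ∂μ = (t ^ n)⁻¹ * ∫ x, g x ∂μ := by
    rw [Measure.integral_comp_smul, abs_of_pos (by positivity)]; rfl
  have e2 : ∫ x, S.indicator (fun _ => (1:ℝ)) (t • x) ∂μ
      = (t ^ n)⁻¹ * ∫ x, S.indicator (fun _ => (1:ℝ)) x ∂μ := by
    rw [Measure.integral_comp_smul μ (S.indicator (fun _ => (1:ℝ))), abs_of_pos (by positivity)]; rfl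
  have hint : ∀ (f : E → ℝ) (l : E), Integrable f μ → IntegrableOn (fun x => f (t • (l + x))) D μ := by
    intro f l hf
    have := (hf.comp_smul ht.ne').comp_add_left l
    exact this.integrableOn
  have key : ∀ l : Submodule.span ℤ (Set.range b),
      |V * g (t • (l:E)) - ∫ x in D, g (t • ((l:E) + x)) ∂μ| ≤
        |K| * B * t * ∫ x in D, S.indicator (fun _ => (1:ℝ)) (t • ((l:E) + x)) ∂μ := by
    intro l
    have h1 : V * g (t • (l:E)) = ∫ x in D, g (t • (l:E)) ∂μ := by
      rw [setIntegral_const, smul_eq_mul]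
    have hci : IntegrableOn (fun _ : E => g (t • (l:E))) D μ := integrableOn_const hDfin
    rw [h1, ← integral_sub hci (hint g l hgint), ← integral_const_mul]
    rw [← Real.norm_eq_abs]
    refine norm_integral_le_of_norm_le ((hint _ l hSint).const_mul _) ?_
    filter_upwards [ae_restrict_mem (ZSpan.fundamentalDomain_measurableSet b)] with x hx
    rw [Real.norm_eq_abs]
    have hxB := hB x hx
    have hd : ‖t • (l:E) - t • ((l:E) + x)‖ ≤ t * B := by
      rw [← smul_sub, norm_smul, Real.norm_of_nonneg ht.le]
      gcongr
      simpa using hxB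
    by_cases hS : t • ((l:E) + x) ∈ S
    · rw [Set.indicator_of_mem hS]
      refine (hK' _ _).trans ?_
      calc |K| * _ ≤ |K| * (t * B) := by gcongr
        _ = _ := by ring
    · rw [Set.indicator_of_notMem hS]
      rw [mem_closedBall_zero_iff, not_le] at hS
      have hR1 := le_abs_self R
      have htB : t * B ≤ B := by nlinarith
      have n1 : ‖t • ((l:E) + x)‖ ≤ ‖t • (l:E)‖ + ‖t • (l:E) - t • ((l:E) + x)‖ := by
        rw [norm_sub_rev]; exact norm_le_insert' _ _
      rw [hR _ (by linarith), hR _ (by linarith)]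
      simp
  have hsum : Summable fun l : Submodule.span ℤ (Set.range b) =>
      V * g (t • (l:E)) - ∫ x in D, g (t • ((l:E) + x)) ∂μ :=
    Summable.of_norm_bounded (s2.summable.mul_left _) key
  have hsum2 : Summable fun l : Submodule.span ℤ (Set.range b) => V * g (t • (l:E)) := by
    exact (hsum.add s1.summable).congr fun l => by ring
  have hsum3 := (summable_mul_left_iff hV0.ne').1 hsum2
  refine ⟨hsum3, ?_⟩
  have hle : |V * ∑' l : Submodule.span ℤ (Set.range b), g (t • (l:E)) - (t ^ n)⁻¹ * ∫ x, g x ∂μ| ≤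
      |K| * B * t * ((t ^ n)⁻¹ * ∫ x, S.indicator (fun _ => (1:ℝ)) x ∂μ) := by
    rw [← e1, ← e2, ← s1.tsum_eq, ← s2.tsum_eq, ← tsum_mul_left, ← tsum_mul_left,
      ← hsum2.tsum_sub s1.summable]
    rw [← Real.norm_eq_abs]
    exact tsum_of_norm_bounded (s2.summable.mul_left _).hasSum key
  have htn : 0 < t ^ n := by positivity
  set T := ∑' l : Submodule.span ℤ (Set.range b), g (t • (l:E))
  have e3 : t ^ n * T - (∫ x, g x ∂μ) / V =
      (t ^ n / V) * (V * T - (t ^ n)⁻¹ * ∫ x, g x ∂μ) := by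
    field_simp
  rw [e3, abs_mul, abs_of_pos (by positivity)]
  refine (mul_le_mul_of_nonneg_left hle (by positivity)).trans (le_of_eq ?_)
  field_simp
end P1
end

section
open Real MeasureTheory Set Filter Topology Asymptotics

noncomputable def f0 (t : ℝ) : ℂ := ((max 0 (1 - t) : ℝ) : ℂ)

lemma f0_cont : Continuous f0 := by unfold f0; fun_prop

lemma f0_zero {t : ℝ} (ht : 1 ≤ t) : f0 t = 0 := by
  unfold f0; rw [max_eq_left (by linarith)]; simp

lemma f0_mellin {u : ℂ} (hu : 0 < u.re) : HasMellin f0 u (1 / u - 1 / (u + 1)) := by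
  have h1 := hasMellin_one_Ioc hu
  have h2 := hasMellin_cpow_Ioc 1 (s := u) (by simp; linarith)
  have h3 := hasMellin_sub h1.1 h2.1
  rw [h1.2, h2.2] at h3
  have he : EqOn (fun t : ℝ => indicator (Ioc (0:ℝ) 1) (fun _ => (1:ℂ)) t -
      indicator (Ioc (0:ℝ) 1) (fun t : ℝ => (t:ℂ) ^ (1:ℂ)) t) f0 (Ioi 0) := by
    intro t ht
    have ht : 0 < t := ht
    by_cases h : t ≤ 1
    · have : t ∈ Ioc (0:ℝ) 1 := ⟨ht, h⟩
      simp only [indicator_of_mem this, Complex.cpow_one]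
      unfold f0; rw [max_eq_right (by linarith)]; simp
    · have : t ∉ Ioc (0:ℝ) 1 := fun h' => h h'.2
      simp only [indicator_of_notMem this]
      rw [f0_zero (by linarith)]; simp
  constructor
  · refine (integrableOn_congr_fun (fun t ht => ?_) measurableSet_Ioi).1 h3.1
    simp only; rw [← he ht]
  · rw [← h3.2]
    refine setIntegral_congr_fun measurableSet_Ioi fun t ht => ?_
    simp only; rw [← he ht]

lemma f0_norm_int {u : ℂ} (hu : 0 < u.re) {x : ℝ} (hx : 0 < x) :
    ∫ t in Ioi (0:ℝ), ‖(t:ℂ) ^ (u - 1) • f0 (x * t)‖ =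
      x ^ (-u.re) * (1 / u.re - 1 / (u.re + 1)) := by
  have h := (mellin_comp_mul_left f0 (u.re : ℂ) hx)
  rw [(f0_mellin (u := (u.re : ℂ)) (by simpa using hu)).2] at h
  have h2 : mellin (fun t => f0 (x * t)) (u.re : ℂ) =
      ((∫ t in Ioi (0:ℝ), ‖(t:ℂ) ^ (u - 1) • f0 (x * t)‖ : ℝ) : ℂ) := by
    rw [mellin, ← integral_complex_ofReal]
    refine setIntegral_congr_fun measurableSet_Ioi fun t ht => ?_
    have ht : 0 < t := ht
    simp only [norm_smul]
    rw [Complex.norm_cpow_eq_rpow_re_of_pos ht]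
    unfold f0
    rw [Complex.norm_real, Real.norm_of_nonneg (le_max_left _ _)]
    push_cast
    rw [Complex.ofReal_cpow ht.le]
    simp
  rw [h2] at h
  have h3 : ((x:ℂ) ^ (-(u.re:ℂ))) = ((x ^ (-u.re) : ℝ) : ℂ) := by
    rw [Complex.ofReal_cpow hx.le]; simp
  rw [h3] at h
  apply Complex.ofReal_injective
  rw [h]; push_cast; simp

lemma cont_of (a : ℕ → ℕ) (hs : ∀ s : ℂ, 1 < s.re → LSeriesSummable (fun n => (a n : ℂ)) s)
    (c C δ : ℝ) (hδ : 0 < δ) (hδ1 : δ ≤ 1)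
    (hΦ : ∀ t : ℝ, 0 < t → t ≤ 1 →
      |∑' n : ℕ, (a n : ℝ) * (n * max 0 (1 - n * t)) - c * t ^ (-2:ℝ)| ≤ C * t ^ (-2 + δ)) :
    ∃ F : ℂ → ℂ, DifferentiableOn ℂ F {s | 1 - δ < s.re} ∧
      ∀ s : ℂ, 1 < s.re → F s = (s - 1) * LSeries (fun n => (a n : ℂ)) s := by
  let Φ : ℝ → ℂ := fun t => ∑' n : ℕ, ((a n : ℂ) * n) * f0 (n * t)
  have hΦr : ∀ t, Φ t = ((∑' n : ℕ, (a n : ℝ) * (n * max 0 (1 - n * t)) : ℝ) : ℂ) := by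
    intro t
    rw [Complex.ofReal_tsum]
    refine tsum_congr fun n => ?_
    unfold f0; push_cast; ring
  have hterm0 : ∀ (t : ℝ) (n : ℕ), 1 ≤ n * t → ((a n : ℂ) * n) * f0 (n * t) = 0 := by
    intro t n h; rw [f0_zero h, mul_zero]
  have hΦ0 : ∀ t : ℝ, 1 ≤ t → Φ t = 0 := by
    intro t ht
    have : ∀ n : ℕ, ((a n : ℂ) * n) * f0 (n * t) = 0 := by
      intro n
      rcases Nat.eq_zero_or_pos n with rfl | hn
      · simp
      · apply hterm0
        have : (1:ℝ) ≤ n := by exact_mod_cast hn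
        nlinarith
    simp only [Φ, this, tsum_zero]
  have hΦc : ContinuousOn Φ (Ioi 0) := by
    intro t0 ht0
    have ht0 : 0 < t0 := ht0
    apply ContinuousAt.continuousWithinAt
    have hev : (fun t : ℝ => ∑ n ∈ Finset.range (⌈2 / t0⌉₊), ((a n : ℂ) * n) * f0 (n * t)) =ᶠ[𝓝 t0] Φ := by
      filter_upwards [lt_mem_nhds (show t0 / 2 < t0 by linarith)] with t ht
      symm
      apply tsum_eq_sum
      intro n hn
      apply hterm0
      rw [Finset.mem_range, not_lt, Nat.ceil_le, div_le_iff₀ ht0] at hn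
      nlinarith [(Nat.cast_nonneg n : (0:ℝ) ≤ n)]
    refine ContinuousAt.congr ?_ hev
    apply Continuous.continuousAt
    refine continuous_finsetSum _ fun n _ => ?_
    exact continuous_const.mul (f0_cont.comp (by fun_prop))
  let P : ℝ → ℂ := fun t => (t:ℂ) ^ (-2:ℂ) • f0 t
  have hPc : ContinuousOn P (Ioi 0) := by
    intro t ht
    have ht : 0 < t := ht
    apply ContinuousAt.continuousWithinAt
    show ContinuousAt (fun t : ℝ => (t:ℂ)^(-2:ℂ) * f0 t) t
    exact (Complex.continuousAt_ofReal_cpow_const _ _ (Or.inr ht.ne')).mul f0_cont.continuousAt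
  let R : ℝ → ℂ := fun t => Φ t - (c:ℂ) • P t
  have hRc : ContinuousOn R (Ioi 0) := hΦc.sub (continuousOn_const.mul hPc)
  have hRloc : LocallyIntegrableOn R (Ioi 0) := hRc.locallyIntegrableOn measurableSet_Ioi
  have hRtop : ∀ A : ℝ, R =O[atTop] (fun t : ℝ => t ^ (-A)) := by
    intro A
    have : R =ᶠ[atTop] fun _ => (0:ℂ) := by
      filter_upwards [eventually_ge_atTop 1] with t ht
      simp only [R, P, hΦ0 t ht, f0_zero ht]; simp
    exact this.trans_isBigO (isBigO_zero _ _)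
  have hRbot : R =O[𝓝[>] 0] (fun t : ℝ => t ^ (-(2 - δ))) := by
    refine IsBigO.of_bound (|C| + |c|) ?_
    filter_upwards [Ioo_mem_nhdsGT (show (0:ℝ) < 1 by norm_num)] with t ht
    have ht0 : 0 < t := ht.1
    have h1 := hΦ t ht.1 ht.2.le
    have e : R t = (((∑' n : ℕ, (a n : ℝ) * (n * max 0 (1 - n * t)) - c * t ^ (-2:ℝ)) +
        c * t ^ (-2:ℝ) * t : ℝ) : ℂ) := by
      simp only [R, P, hΦr]
      unfold f0
      rw [max_eq_right (by linarith [ht.2])]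
      push_cast
      rw [Complex.ofReal_cpow ht0.le]
      simp only [smul_eq_mul]
      push_cast
      ring
    rw [e, Complex.norm_real, Real.norm_eq_abs, Real.norm_of_nonneg (by positivity)]
    have e3 : t ^ (-(2-δ)) = t ^ (-2 + δ) := by congr 1; ring
    have h2 : |c * t ^ (-2:ℝ) * t| ≤ |c| * t ^ (-2 + δ) := by
      rw [mul_assoc, abs_mul, abs_of_pos (by positivity : 0 < t ^ (-2:ℝ) * t)]
      have : t ^ (-2:ℝ) * t = t ^ (-2 + 1 : ℝ) := by
        rw [rpow_add ht0, rpow_one]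
      rw [this]
      gcongr ?_ * ?_
      exact rpow_le_rpow_of_exponent_ge ht0 ht.2.le (by linarith)
    rw [e3, add_mul]
    refine (abs_add_le _ _).trans (add_le_add (h1.trans ?_) h2)
    gcongr
    exact le_abs_self C
  have hRd : ∀ u : ℂ, 2 - δ < u.re → DifferentiableAt ℂ (mellin R) u := fun u hu =>
    mellin_differentiableAt_of_isBigO_rpow hRloc (hRtop (u.re + 1)) (by linarith) hRbot hu
  have hRm : ∀ u : ℂ, 2 - δ < u.re → MellinConvergent R u := fun u hu =>
    mellinConvergent_of_isBigO_rpow hRloc (hRtop (u.re + 1)) (by linarith) hRbot hu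
  have hP : ∀ u : ℂ, 2 < u.re → HasMellin P u (1 / (u - 2) - 1 / (u - 1)) := by
    intro u hu
    have h := f0_mellin (u := u + (-2)) (by simp; linarith)
    refine ⟨MellinConvergent.cpow_smul.2 h.1, ?_⟩
    rw [mellin_cpow_smul, h.2]
    congr 2 <;> ring
  have hsum : ∀ u : ℂ, 2 < u.re →
      mellin Φ u = LSeries (fun n => (a n : ℂ)) (u - 1) * (1 / u - 1 / (u + 1)) := by
    intro u hu
    have hu0 : 0 < u.re := by linarith
    have hconv : ∀ n : ℕ, Integrable (fun t : ℝ => ((a n : ℂ) * n) • ((t:ℂ) ^ (u - 1) • f0 (n * t)))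
        (volume.restrict (Ioi 0)) := by
      intro n
      rcases Nat.eq_zero_or_pos n with rfl | hn
      · simp
      · have hn' : (0:ℝ) < n := by exact_mod_cast hn
        have h0 : Integrable (fun t : ℝ => ((t:ℂ) ^ (u - 1) • f0 (n * t))) (volume.restrict (Ioi 0)) :=
          (MellinConvergent.comp_mul_left hn').2 (f0_mellin hu0).1
        exact h0.const_mul _
    have hS := hs (u - 1) (by simp; linarith)
    have hnorm : Summable fun n : ℕ => ∫ t in Ioi (0:ℝ),
        ‖((a n : ℂ) * n) • ((t:ℂ) ^ (u - 1) • f0 (n * t))‖ := by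
      refine (hS.norm.mul_right (1 / u.re - 1 / (u.re + 1))).congr fun n => ?_
      simp only [norm_smul ((a n : ℂ) * n)]
      rw [integral_const_mul]
      rcases Nat.eq_zero_or_pos n with rfl | hn
      · simp
      · have hn' : (0:ℝ) < n := by exact_mod_cast hn
        rw [f0_norm_int hu0 hn', LSeries.term_of_ne_zero hn.ne', norm_div, norm_mul,
          Complex.norm_natCast_cpow_of_pos hn, Complex.norm_natCast, Complex.norm_natCast,
          ← mul_assoc]
        congr 1
        rw [Complex.sub_re, Complex.one_re, rpow_sub hn', rpow_neg hn'.le, rpow_one]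
        field_simp
    have h := hasSum_integral_of_summable_integral_norm hconv hnorm
    have h1 : mellin Φ u = ∫ t in Ioi (0:ℝ), ∑' n : ℕ, ((a n : ℂ) * n) • ((t:ℂ) ^ (u - 1) • f0 (n * t)) := by
      refine setIntegral_congr_fun measurableSet_Ioi fun t ht => ?_
      simp only [Φ, smul_eq_mul]
      rw [← tsum_mul_left]
      refine tsum_congr fun n => by ring
    rw [h1, ← h.tsum_eq, LSeries, ← tsum_mul_right]
    refine tsum_congr fun n => ?_
    rw [integral_smul]
    rcases Nat.eq_zero_or_pos n with rfl | hn
    · simp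
    have hn' : (0:ℝ) < n := by exact_mod_cast hn
    have h2 := mellin_comp_mul_left f0 u hn'
    rw [(f0_mellin hu0).2] at h2
    rw [mellin] at h2
    rw [h2, LSeries.term_of_ne_zero hn.ne', smul_eq_mul, smul_eq_mul, ← mul_assoc]
    congr 1
    have hnc : (n : ℂ) ≠ 0 := by exact_mod_cast hn.ne'
    rw [Complex.cpow_sub _ _ hnc, Complex.ofReal_natCast, Complex.cpow_neg, Complex.cpow_one]
    have : (n:ℂ) ^ u ≠ 0 := by simp [Complex.cpow_eq_zero_iff, hnc]
    field_simp
  refine ⟨fun s => (s + 1) * (s + 2) * ((s - 1) * mellin R (s + 1) + c / s), ?_, ?_⟩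
  · intro s hsr
    have hsr : 1 - δ < s.re := hsr
    apply DifferentiableAt.differentiableWithinAt
    have h1 : DifferentiableAt ℂ (fun s => mellin R (s + 1)) s :=
      DifferentiableAt.fun_comp' (g := mellin R) (f := fun s => s + 1) s (hRd (s + 1) (by simp; linarith)) (by fun_prop)
    have hs0 : s ≠ 0 := by rintro rfl; simp at hsr; linarith
    have h2 : DifferentiableAt ℂ (fun s : ℂ => (c:ℂ) / s) s := by
      exact (differentiableAt_const _).div differentiableAt_id hs0
    fun_prop
  · intro s hsr
    have hu : 2 < (s + 1).re := by simp; linarith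
    have hR : MellinConvergent R (s + 1) := hRm _ (by linarith)
    have h1 := hasMellin_add hR ((hP _ hu).1.const_smul (c:ℂ))
    have e : (fun t => R t + (c:ℂ) • P t) = Φ := by funext t; simp [R]
    rw [e] at h1
    have h2 := h1.2
    rw [hsum _ hu, mellin_const_smul, (hP _ hu).2] at h2
    have n0 : s ≠ 0 := by rintro rfl; simp at hsr; linarith
    have n1 : s - 1 ≠ 0 := by
      intro h; have := congrArg Complex.re h; simp at this; linarith
    have n2 : s + 1 ≠ 0 := by
      intro h; have := congrArg Complex.re h; simp at this; linarith
    have n3 : s + 2 ≠ 0 := by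
      intro h; have := congrArg Complex.re h; simp at this; linarith
    rw [show s + 1 - 1 = s by ring, show s + 1 - 2 = s - 1 by ring, show s + 1 + 1 = s + 2 by ring] at h2
    have h3 : mellin R (s + 1) = LSeries (fun n => (a n : ℂ)) s * (1 / (s+1) - 1 / (s + 2)) -
        c • (1 / (s - 1) - 1 / s) := by
      rw [h2]; simp
    simp only [h3, Complex.real_smul]
    field_simp
    ring
end

section
section
open NumberField NumberField.Units NumberField.Units.dirichletUnitTheorem NumberField.mixedEmbedding Module
open Classical

noncomputable def tent (y : ℝ) : ℝ := max 0 (1 - |y|)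

lemma tent_nonneg (y : ℝ) : 0 ≤ tent y := le_max_left _ _
lemma tent_le_one (y : ℝ) : tent y ≤ 1 := max_le zero_le_one (by linarith [abs_nonneg y])
lemma tent_lip (x y : ℝ) : |tent x - tent y| ≤ |x - y| := by
  unfold tent
  refine (abs_max_sub_max_le_max 0 (1 - |x|) 0 (1 - |y|)).trans ?_
  rw [max_le_iff]
  refine ⟨by simp, ?_⟩
  have := abs_abs_sub_abs_le y x
  rw [show 1 - |x| - (1 - |y|) = |y| - |x| by ring, abs_sub_comm x y]
  exact this
lemma tent_ne {y : ℝ} (h : tent y ≠ 0) : |y| < 1 := by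
  by_contra h'
  apply h
  unfold tent
  rw [max_eq_left]; linarith

lemma tent_sum (y : ℝ) : ∑ k ∈ ({-⌊y⌋ - 1, -⌊y⌋} : Finset ℤ), tent ((k:ℝ) + y) = 1 := by
  rw [Finset.sum_pair (by lia)]
  have h1 := Int.floor_le y
  have h2 := Int.lt_floor_add_one y
  unfold tent
  push_cast
  rw [abs_of_nonpos (by linarith : -(⌊y⌋:ℝ) - 1 + y ≤ 0), abs_of_nonneg (by linarith : 0 ≤ -(⌊y⌋:ℝ) + y)]
  rw [max_eq_right (by linarith), max_eq_right (by linarith)]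
  ring

lemma tent_supp (y : ℝ) (k : ℤ) (h : tent ((k:ℝ) + y) ≠ 0) : k ∈ ({-⌊y⌋ - 1, -⌊y⌋} : Finset ℤ) := by
  have := abs_lt.1 (tent_ne h)
  have h1 := Int.floor_le y
  have h2 := Int.lt_floor_add_one y
  have a : (k:ℝ) < (-⌊y⌋ + 1 : ℤ) := by push_cast; linarith
  have b : ((-⌊y⌋ - 2 : ℤ) : ℝ) < k := by push_cast; linarith
  have a' := Int.cast_lt.1 a
  have b' := Int.cast_lt.1 b
  simp only [Finset.mem_insert, Finset.mem_singleton]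
  lia

lemma tent_tsum {r : ℕ} (y : Fin r → ℝ) :
    ∑' k : Fin r → ℤ, ENNReal.ofReal (∏ i, tent ((k i : ℝ) + y i)) = 1 := by
  rw [tsum_eq_sum (s := Fintype.piFinset fun i => ({-⌊y i⌋ - 1, -⌊y i⌋} : Finset ℤ)),
    ← ENNReal.ofReal_sum_of_nonneg (fun _ _ => Finset.prod_nonneg fun _ _ => tent_nonneg _)]
  · rw [← Finset.prod_univ_sum (fun i => ({-⌊y i⌋ - 1, -⌊y i⌋} : Finset ℤ)) (fun i k => tent ((k:ℝ) + y i))]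
    simp only [tent_sum]
    simp
  · intro k hk
    rw [Fintype.mem_piFinset] at hk
    push Not at hk
    obtain ⟨i, hi⟩ := hk
    rw [ENNReal.ofReal_eq_zero]
    apply le_of_eq
    apply Finset.prod_eq_zero (Finset.mem_univ i)
    by_contra h
    exact hi (tent_supp _ _ h)

variable (L : Type*) [Field L] [NumberField L]

noncomputable def lb : Basis (Fin (rank L)) ℝ (logSpace L) := (basisUnitLattice L).ofZLatticeBasis ℝ _

noncomputable def tau (y : logSpace L) : ℝ := ∏ i, tent ((lb L).repr y i)

lemma tau_nonneg (y : logSpace L) : 0 ≤ tau L y := Finset.prod_nonneg fun _ _ => tent_nonneg _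

lemma tau_le_one (y : logSpace L) : tau L y ≤ 1 := Finset.prod_le_one (fun _ _ => tent_nonneg _) fun _ _ => tent_le_one _

lemma tau_sum {x : mixedSpace L} (hx : mixedEmbedding.norm x ≠ 0) :
    ∑' u : (𝓞 L)ˣ, ENNReal.ofReal (tau L (logMap (u • x))) = torsionOrder L := by
  let f : torsion L × (Fin (rank L) → ℤ) → (𝓞 L)ˣ := fun p => p.1 * ∏ i, (fundSystem L i) ^ (p.2 i)
  have hf : Function.Bijective f := by
    rw [Function.bijective_iff_existsUnique]
    intro u
    obtain ⟨p, hp, hu⟩ := exist_unique_eq_mul_prod L u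
    exact ⟨p, hp.symm, fun q hq => hu q hq.symm⟩
  have key : ∀ p, tau L (logMap (f p • x)) = ∏ i, tent ((p.2 i : ℝ) + (lb L).repr (logMap x) i) := by
    rintro ⟨z, k⟩
    unfold tau
    refine Finset.prod_congr rfl fun i _ => ?_
    congr 1
    rw [logMap_unit_smul _ hx, map_add, Finsupp.add_apply]
    congr 1
    have : logEmbedding L (Additive.ofMul (f (z, k))) = ∑ i, (k i : ℝ) • lb L i := by
      simp only [f]
      rw [ofMul_mul, map_add, logEmbedding_eq_zero_iff.2 z.2, zero_add, ofMul_prod, map_sum]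
      refine Finset.sum_congr rfl fun i _ => ?_
      rw [ofMul_zpow, map_zsmul, logEmbedding_fundSystem, lb, Basis.ofZLatticeBasis_apply, Int.cast_smul_eq_zsmul]
    rw [this, Basis.repr_sum_self]
  rw [← (Equiv.ofBijective f hf).tsum_eq]
  simp only [Equiv.ofBijective_apply, key]
  rw [ENNReal.tsum_prod (f := fun (_ : torsion L) (k : Fin (rank L) → ℤ) => ENNReal.ofReal (∏ i, tent ((k i : ℝ) + (lb L).repr (logMap x) i)))]
  simp only [tent_tsum]
  haveI := Fintype.ofFinite (torsion L)
  rw [tsum_fintype]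
  simp [torsionOrder, Nat.card_eq_fintype_card]
end
end

section
section
open NumberField NumberField.Units NumberField.Units.dirichletUnitTheorem NumberField.mixedEmbedding Module
open Classical

lemma prod_lip {ι : Type*} (s : Finset ι) (a b : ι → ℝ) (ha : ∀ i, 0 ≤ a i ∧ a i ≤ 1)
    (hb : ∀ i, 0 ≤ b i ∧ b i ≤ 1) : |∏ i ∈ s, a i - ∏ i ∈ s, b i| ≤ ∑ i ∈ s, |a i - b i| := by
  induction s using Finset.induction_on with
  | empty => simp
  | insert i s hi ih =>
    rw [Finset.prod_insert hi, Finset.prod_insert hi, Finset.sum_insert hi]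
    have h1 : 0 ≤ ∏ i ∈ s, a i := Finset.prod_nonneg fun i _ => (ha i).1
    have h2 : ∏ i ∈ s, a i ≤ 1 := Finset.prod_le_one (fun i _ => (ha i).1) fun i _ => (ha i).2
    calc _ = |(a i - b i) * ∏ i ∈ s, a i + b i * (∏ i ∈ s, a i - ∏ i ∈ s, b i)| := by ring_nf
      _ ≤ |a i - b i| * |∏ i ∈ s, a i| + |b i| * |∏ i ∈ s, a i - ∏ i ∈ s, b i| := by
        rw [← abs_mul, ← abs_mul]; exact abs_add_le _ _
      _ ≤ |a i - b i| * 1 + 1 * ∑ i ∈ s, |a i - b i| := by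
        gcongr
        · rwa [abs_of_nonneg h1]
        · rw [abs_of_nonneg (hb i).1]; exact (hb i).2
      _ = _ := by ring

variable (L : Type*) [Field L] [NumberField L]

lemma tau_bdd : ∃ M : ℝ, 0 ≤ M ∧ ∀ y : logSpace L, tau L y ≠ 0 → ∀ w, |y w| ≤ M := by
  refine ⟨∑ i, ‖lb L i‖, Finset.sum_nonneg fun _ _ => norm_nonneg _, fun y hy w => ?_⟩
  have h : ∀ i, |(lb L).repr y i| ≤ 1 := fun i => by
    have := Finset.prod_ne_zero_iff.1 hy i (Finset.mem_univ i)
    exact (tent_ne this).le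
  rw [← Real.norm_eq_abs]
  refine (norm_le_pi_norm y w).trans ?_
  conv_lhs => rw [← (lb L).sum_repr y]
  refine (norm_sum_le _ _).trans (Finset.sum_le_sum fun i _ => ?_)
  rw [_root_.norm_smul, Real.norm_eq_abs]
  exact mul_le_of_le_one_left (norm_nonneg _) (h i)

lemma tau_lip : ∃ K : ℝ, 0 ≤ K ∧ ∀ y z : logSpace L, |tau L y - tau L z| ≤ K * ‖y - z‖ := by
  refine ⟨∑ i, ‖LinearMap.toContinuousLinearMap ((lb L).coord i)‖,
    Finset.sum_nonneg fun _ _ => norm_nonneg _, fun y z => ?_⟩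
  refine (prod_lip _ _ _ (fun i => ⟨tent_nonneg _, tent_le_one _⟩) (fun i => ⟨tent_nonneg _, tent_le_one _⟩)).trans ?_
  rw [Finset.sum_mul]
  refine Finset.sum_le_sum fun i _ => (tent_lip _ _).trans ?_
  have := (LinearMap.toContinuousLinearMap ((lb L).coord i)).le_opNorm (y - z)
  rw [LinearMap.coe_toContinuousLinearMap', map_sub, Basis.coord_apply, Basis.coord_apply] at this
  exact this

lemma log_norm_sum {x : mixedSpace L} (hx : mixedEmbedding.norm x ≠ 0) :
    Real.log (mixedEmbedding.norm x) = ∑ w : InfinitePlace L, (w.mult : ℝ) * Real.log (normAtPlace w x) := by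
  rw [mixedEmbedding.norm_apply, Real.log_prod]
  · simp
  · intro w _
    exact pow_ne_zero _ (mixedEmbedding.norm_ne_zero_iff.1 hx w)

lemma place_bdd : ∃ B : ℝ, 0 ≤ B ∧ ∀ x : mixedSpace L, mixedEmbedding.norm x ≠ 0 → tau L (logMap x) ≠ 0 →
    ∀ w, |Real.log (normAtPlace w x) - Real.log (mixedEmbedding.norm x) * (finrank ℚ L : ℝ)⁻¹| ≤ B := by
  obtain ⟨M, hM0, hM⟩ := tau_bdd L
  refine ⟨(Fintype.card (InfinitePlace L) + 1) * M, by positivity, fun x hx ht w => ?_⟩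
  set d : InfinitePlace L → ℝ := fun w => (w.mult : ℝ) * (Real.log (normAtPlace w x) - Real.log (mixedEmbedding.norm x) * (finrank ℚ L : ℝ)⁻¹) with hd
  have h1 : ∀ w, w ≠ w₀ → |d w| ≤ M := fun w hw => hM _ ht ⟨w, hw⟩
  have hsum : ∑ w, d w = 0 := by
    simp only [hd, mul_sub]
    rw [Finset.sum_sub_distrib, ← log_norm_sum L hx, ← Finset.sum_mul]
    have : (∑ w : InfinitePlace L, (w.mult : ℝ)) = finrank ℚ L := by
      rw [← InfinitePlace.sum_mult_eq]; push_cast; rfl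
    rw [this]
    have : (finrank ℚ L : ℝ) ≠ 0 := by exact_mod_cast finrank_pos.ne'
    field_simp
    ring
  have h2 : |d w₀| ≤ Fintype.card (InfinitePlace L) * M := by
    rw [← Finset.add_sum_erase _ _ (Finset.mem_univ w₀)] at hsum
    rw [eq_neg_of_add_eq_zero_left hsum, abs_neg]
    refine (Finset.abs_sum_le_sum_abs _ _).trans ?_
    refine (Finset.sum_le_card_nsmul _ _ M fun w hw => h1 w (Finset.ne_of_mem_erase hw)).trans ?_
    rw [nsmul_eq_mul]
    gcongr
    exact Finset.card_le_univ _
  have h3 : |d w| ≤ (Fintype.card (InfinitePlace L) + 1) * M := by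
    by_cases hw : w = w₀
    · rw [hw]; linarith
    · have := h1 w hw
      have : 0 ≤ (Fintype.card (InfinitePlace L) : ℝ) * M := by positivity
      linarith
  refine le_trans ?_ h3
  simp only [hd]
  rw [abs_mul, abs_of_nonneg (by positivity : (0:ℝ) ≤ (w.mult : ℝ))]
  refine le_mul_of_one_le_left (abs_nonneg _) ?_
  exact_mod_cast InfinitePlace.mult_pos

noncomputable def psi (y : ℝ) : ℝ := y * max 0 (1 - y)

lemma psi_nonneg {y : ℝ} (hy : 0 ≤ y) : 0 ≤ psi y := mul_nonneg hy (le_max_left _ _)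
lemma psi_le {y : ℝ} (hy : 0 ≤ y) : psi y ≤ y := by
  refine mul_le_of_le_one_right hy (max_le zero_le_one (by linarith))
lemma psi_ne {y : ℝ} (h : psi y ≠ 0) : y < 1 := by
  by_contra h'
  apply h
  rw [psi, max_eq_left (by linarith), mul_zero]
lemma psi_lip {x y : ℝ} (hx : 0 ≤ x) (hy : 0 ≤ y) : |psi x - psi y| ≤ |x - y| := by
  wlog h : x ≤ y generalizing x y
  · rw [abs_sub_comm, abs_sub_comm x]; exact this hy hx (by linarith)
  rw [abs_of_nonpos (by linarith : x - y ≤ 0), abs_le]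
  unfold psi
  rcases le_total y 1 with h1 | h1
  · rw [max_eq_right (by linarith), max_eq_right (by linarith)]
    constructor <;> nlinarith
  · rw [max_eq_left (by linarith : 1 - y ≤ 0)]
    rcases le_total x 1 with h2 | h2
    · rw [max_eq_right (by linarith)]
      constructor <;> nlinarith
    · rw [max_eq_left (by linarith)]
      constructor <;> nlinarith

noncomputable def gg (x : mixedSpace L) : ℝ := tau L (logMap x) * psi (mixedEmbedding.norm x)

lemma gg_nonneg (x : mixedSpace L) : 0 ≤ gg L x := mul_nonneg (tau_nonneg _ _) (psi_nonneg (mixedEmbedding.norm_nonneg x))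
lemma gg_le (x : mixedSpace L) : gg L x ≤ mixedEmbedding.norm x :=
  (mul_le_of_le_one_left (psi_nonneg (mixedEmbedding.norm_nonneg x)) (tau_le_one _ _)).trans (psi_le (mixedEmbedding.norm_nonneg x))

lemma place_le_norm (w : InfinitePlace L) (x : mixedSpace L) : normAtPlace w x ≤ ‖x‖ := by
  rw [norm_eq_sup'_normAtPlace]
  exact Finset.le_sup' (fun w => normAtPlace w x) (Finset.mem_univ w)

lemma place_sub (w : InfinitePlace L) (x y : mixedSpace L) : |normAtPlace w x - normAtPlace w y| ≤ ‖x - y‖ := by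
  have h1 := normAtPlace_add_le w (x - y) y
  have h2 := normAtPlace_add_le w (y - x) x
  rw [sub_add_cancel] at h1 h2
  have h3 := place_le_norm L w (x - y)
  have h4 := place_le_norm L w (y - x)
  rw [norm_sub_rev] at h4
  rw [abs_le]; constructor <;> linarith

lemma gg_facts {B : ℝ} (hB : ∀ x : mixedSpace L, mixedEmbedding.norm x ≠ 0 → tau L (logMap x) ≠ 0 →
    ∀ w, |Real.log (normAtPlace w x) - Real.log (mixedEmbedding.norm x) * (finrank ℚ L : ℝ)⁻¹| ≤ B)
    {x : mixedSpace L} (hx : gg L x ≠ 0) :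
    mixedEmbedding.norm x ≠ 0 ∧ ∃ r : ℝ, 0 < r ∧ r ≤ 1 ∧ mixedEmbedding.norm x ≤ r ∧
      ∀ w, Real.exp (-B) * r ≤ normAtPlace w x ∧ normAtPlace w x ≤ Real.exp B * r := by
  have ht := left_ne_zero_of_mul hx
  have hp := right_ne_zero_of_mul hx
  have hN : mixedEmbedding.norm x ≠ 0 := by
    intro h; apply hp; rw [h]; simp [psi]
  have hN0 : 0 < mixedEmbedding.norm x := lt_of_le_of_ne (mixedEmbedding.norm_nonneg x) hN.symm
  have hn : (1:ℝ) ≤ finrank ℚ L := by exact_mod_cast (finrank_pos (R := ℚ) (M := L))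
  have hlog : Real.log (mixedEmbedding.norm x) ≤ 0 := Real.log_nonpos hN0.le (psi_ne hp).le
  refine ⟨hN, Real.exp (Real.log (mixedEmbedding.norm x) * (finrank ℚ L : ℝ)⁻¹), Real.exp_pos _, ?_, ?_, ?_⟩
  · rw [Real.exp_le_one_iff]
    exact mul_nonpos_of_nonpos_of_nonneg hlog (by positivity)
  · conv_lhs => rw [← Real.exp_log hN0]
    rw [Real.exp_le_exp]
    have : (finrank ℚ L : ℝ)⁻¹ ≤ 1 := inv_le_one_of_one_le₀ hn
    nlinarith
  · intro w
    have hw : 0 < normAtPlace w x := lt_of_le_of_ne (normAtPlace_nonneg w x) (mixedEmbedding.norm_ne_zero_iff.1 hN w).symm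
    have := abs_le.1 (hB x hN ht w)
    rw [← Real.exp_add, ← Real.exp_add, ← Real.le_log_iff_exp_le hw, ← Real.log_le_iff_le_exp hw]
    constructor <;> linarith

lemma log_sub_le {a b D : ℝ} (ha : 0 < a) (hb : 0 < b) (h1 : |a - b| ≤ D * a) (h2 : |a - b| ≤ D * b) :
    |Real.log a - Real.log b| ≤ D := by
  rw [← Real.log_div ha.ne' hb.ne']
  have e1 := Real.log_le_sub_one_of_pos (div_pos ha hb)
  have e2 := Real.one_sub_inv_le_log_of_pos (div_pos ha hb)
  rw [inv_div] at e2
  have i1 : a / b - 1 ≤ D := by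
    rw [div_sub_one hb.ne', div_le_iff₀ hb]; exact (le_abs_self _).trans h2
  have i2 : b / a - 1 ≤ D := by
    rw [div_sub_one ha.ne', div_le_iff₀ ha]; rw [abs_sub_comm] at h1; exact (le_abs_self _).trans h1
  rw [abs_le]; constructor <;> linarith

lemma exp_sub_aux (δ : ℝ) : |1 - Real.exp δ| ≤ |δ| * Real.exp |δ| := by
  have c1 := Real.add_one_le_exp δ
  have c2 := Real.add_one_le_exp (-δ)
  have c3 : Real.exp δ * Real.exp (-δ) = 1 := by rw [← Real.exp_add]; simp
  have c4 := Real.exp_pos δ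
  rcases le_total 0 δ with h | h
  · rw [abs_of_nonneg h, abs_le]
    have : 0 ≤ δ * Real.exp δ := by positivity
    constructor
    · nlinarith
    · linarith
  · rw [abs_of_nonpos h, abs_le]
    have : 1 ≤ Real.exp (-δ) := Real.one_le_exp (by linarith)
    have h1 : Real.exp δ ≤ 1 := Real.exp_le_one_iff.2 h
    constructor <;> nlinarith

set_option maxHeartbeats 1000000 in
lemma gg_lip : ∃ K : ℝ, ∀ x y : mixedSpace L, |gg L x - gg L y| ≤ K * ‖x - y‖ := by
  obtain ⟨B, hB0, hB⟩ := place_bdd L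
  obtain ⟨K, hK0, hK⟩ := tau_lip L
  set n : ℝ := (finrank ℚ L : ℝ) with hn
  have hn0 : 0 ≤ n := by positivity
  have hn1 : 1 ≤ n := by rw [hn]; exact_mod_cast (finrank_pos (R := ℚ) (M := L))
  set κ : ℝ := Real.exp (-B) / 2 with hκ
  have hκ0 : 0 < κ := by positivity
  set K' : ℝ := (1 + 4 * K + n * Real.exp n) / κ with hK'
  suffices H : ∀ x y : mixedSpace L, gg L x ≠ 0 → (gg L y = 0 ∨ mixedEmbedding.norm y ≤ mixedEmbedding.norm x) →
      |gg L x - gg L y| ≤ K' * ‖x - y‖ by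
    refine ⟨K', fun x y => ?_⟩
    have H' : ∀ x y : mixedSpace L, gg L x ≠ 0 → (gg L y = 0 ∨ mixedEmbedding.norm y ≤ mixedEmbedding.norm x) →
      |gg L y - gg L x| ≤ K' * ‖y - x‖ := fun x y h1 h2 => by
      rw [abs_sub_comm, norm_sub_rev]; exact H x y h1 h2
    by_cases hx : gg L x = 0
    · by_cases hy : gg L y = 0
      · rw [hx, hy]; simp; positivity
      · exact H' y x hy (Or.inl hx)
    · by_cases hy : gg L y = 0
      · exact H x y hx (Or.inl hy)
      · rcases le_total (mixedEmbedding.norm y) (mixedEmbedding.norm x) with h | h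
        · exact H x y hx (Or.inr h)
        · exact H' y x hy (Or.inr h)
  intro x y hx hxy
  obtain ⟨hN, r, hr0, hr1, hNr, hw⟩ := gg_facts L hB hx
  have hN0 : 0 < mixedEmbedding.norm x := lt_of_le_of_ne (mixedEmbedding.norm_nonneg x) hN.symm
  set ρ := ‖x - y‖ with hρ
  have hρ0 : 0 ≤ ρ := norm_nonneg _
  have hA : 0 ≤ 4 * K + n * Real.exp n := by positivity
  rcases le_or_gt (κ * r) ρ with hc | hc
  · have h1 : |gg L x - gg L y| ≤ r := by
      have a1 := gg_le L x
      have a2 := gg_nonneg L x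
      have a3 := gg_nonneg L y
      have a4 : gg L y ≤ mixedEmbedding.norm x := by
        rcases hxy with h | h
        · rw [h]; exact hN0.le
        · exact (gg_le L y).trans h
      rw [abs_le]; constructor <;> linarith
    refine h1.trans ?_
    rw [hK', div_mul_eq_mul_div, le_div_iff₀ hκ0]
    nlinarith [mul_nonneg hA hρ0]
  · set D := ρ / (κ * r) with hD
    have hD0 : 0 ≤ D := by positivity
    have hD1 : D < 1 := by rw [hD, div_lt_one (by positivity)]; exact hc
    have hρD : ρ = D * (κ * r) := by rw [hD]; field_simp
    have hpl : ∀ w, 0 < normAtPlace w x ∧ 0 < normAtPlace w y ∧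
        |Real.log (normAtPlace w x) - Real.log (normAtPlace w y)| ≤ D := by
      intro w
      have h1 := (hw w).1
      have h2 := place_sub L w x y
      have h3 := abs_le.1 h2
      have h4 : Real.exp (-B) = 2 * κ := by rw [hκ]; ring
      rw [h4] at h1
      have hkr : 0 < κ * r := by positivity
      have p1 : 0 < normAtPlace w x := by nlinarith
      have p2 : κ * r ≤ normAtPlace w y := by nlinarith
      refine ⟨p1, by linarith, log_sub_le p1 (by linarith) (h2.trans ?_) (h2.trans ?_)⟩
      · rw [← hρ, hρD]; gcongr; nlinarith
      · rw [← hρ, hρD]; gcongr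
    have hNy : mixedEmbedding.norm y ≠ 0 := mixedEmbedding.norm_ne_zero_iff.2 fun w => (hpl w).2.1.ne'
    have hNy0 : 0 < mixedEmbedding.norm y := lt_of_le_of_ne (mixedEmbedding.norm_nonneg y) hNy.symm
    have hlogN : |Real.log (mixedEmbedding.norm x) - Real.log (mixedEmbedding.norm y)| ≤ n * D := by
      rw [log_norm_sum L hN, log_norm_sum L hNy, ← Finset.sum_sub_distrib]
      refine (Finset.abs_sum_le_sum_abs _ _).trans ?_
      have : n = (∑ w : InfinitePlace L, (w.mult : ℝ)) := by
        rw [hn, ← InfinitePlace.sum_mult_eq]; push_cast; rfl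
      rw [this, Finset.sum_mul]
      refine Finset.sum_le_sum fun w _ => ?_
      rw [← mul_sub, abs_mul, abs_of_nonneg (by positivity : (0:ℝ) ≤ (w.mult : ℝ))]
      gcongr
      exact (hpl w).2.2
    have hlm : ‖(logMap x : logSpace L) - logMap y‖ ≤ 4 * D := by
      rw [pi_norm_le_iff_of_nonneg (by positivity)]
      intro w
      rw [Pi.sub_apply, logMap_apply, logMap_apply, ← mul_sub, Real.norm_eq_abs, abs_mul,
        abs_of_nonneg (by positivity : (0:ℝ) ≤ (w.1.mult : ℝ))]
      have m2 : (w.1.mult : ℝ) ≤ 2 := by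
        have : w.1.mult ≤ 2 := by unfold InfinitePlace.mult; split_ifs <;> norm_num
        exact_mod_cast this
      have : |Real.log (normAtPlace w.1 x) - Real.log (mixedEmbedding.norm x) * (finrank ℚ L : ℝ)⁻¹ -
          (Real.log (normAtPlace w.1 y) - Real.log (mixedEmbedding.norm y) * (finrank ℚ L : ℝ)⁻¹)| ≤ 2 * D := by
        rw [← hn]
        have a1 := abs_le.1 (hpl w.1).2.2
        have a2 : |(Real.log (mixedEmbedding.norm x) - Real.log (mixedEmbedding.norm y)) * n⁻¹| ≤ D := by
          rw [abs_mul, abs_of_nonneg (by positivity : 0 ≤ n⁻¹), ← div_eq_mul_inv, div_le_iff₀ (by linarith)]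
          linarith
        rw [sub_mul] at a2
        have a2 := abs_le.1 a2
        rw [abs_le]; constructor <;> linarith
      calc _ ≤ 2 * (2 * D) := by gcongr
        _ = _ := by ring
    have hτ : |tau L (logMap x) - tau L (logMap y)| ≤ 4 * K * D := by
      refine (hK _ _).trans ?_
      nlinarith
    have hdN : |mixedEmbedding.norm x - mixedEmbedding.norm y| ≤ r * (n * Real.exp n * D) := by
      set δ := Real.log (mixedEmbedding.norm y) - Real.log (mixedEmbedding.norm x) with hδ
      have hδ' : |δ| ≤ n * D := by rw [hδ, abs_sub_comm]; exact hlogN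
      have e : mixedEmbedding.norm y = mixedEmbedding.norm x * Real.exp δ := by
        rw [hδ, Real.exp_sub, Real.exp_log hN0, Real.exp_log hNy0]; field_simp
      rw [e, show mixedEmbedding.norm x - mixedEmbedding.norm x * Real.exp δ = mixedEmbedding.norm x * (1 - Real.exp δ) by ring,
        abs_mul, abs_of_pos hN0]
      have h1 : |1 - Real.exp δ| ≤ n * Real.exp n * D := by
        have hδn : |δ| ≤ n := hδ'.trans (by nlinarith)
        have b1 : Real.exp |δ| ≤ Real.exp n := Real.exp_le_exp.2 hδn
        have b2 := exp_sub_aux δ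
        calc _ ≤ |δ| * Real.exp |δ| := b2
          _ ≤ (n * D) * Real.exp n := by gcongr
          _ = _ := by ring
      gcongr
    have hρr : D * r = ρ / κ := by rw [hρD]; field_simp
    have hψ := psi_lip hN0.le hNy0.le
    have ht0 := tau_nonneg L (logMap y)
    have ht1 := tau_le_one L (logMap y)
    have hp0 := psi_nonneg hN0.le
    have hp1 := psi_le hN0.le
    calc |gg L x - gg L y| = |(tau L (logMap x) - tau L (logMap y)) * psi (mixedEmbedding.norm x) +
          tau L (logMap y) * (psi (mixedEmbedding.norm x) - psi (mixedEmbedding.norm y))| := by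
          unfold gg; ring_nf
      _ ≤ |tau L (logMap x) - tau L (logMap y)| * |psi (mixedEmbedding.norm x)| +
          |tau L (logMap y)| * |psi (mixedEmbedding.norm x) - psi (mixedEmbedding.norm y)| := by
          rw [← abs_mul, ← abs_mul]; exact abs_add_le _ _
      _ ≤ (4 * K * D) * r + 1 * (r * (n * Real.exp n * D)) := by
          gcongr
          · rw [abs_of_nonneg hp0]; linarith
          · rw [abs_of_nonneg ht0]; exact ht1
          · exact hψ.trans hdN
      _ = (4 * K + n * Real.exp n) * (D * r) := by ring
      _ ≤ K' * ρ := by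
          rw [hρr, hK']
          rw [mul_div_assoc', div_mul_eq_mul_div]
          gcongr
          linarith

lemma gg_supp : ∃ R : ℝ, ∀ x : mixedSpace L, R < ‖x‖ → gg L x = 0 := by
  obtain ⟨B, hB0, hB⟩ := place_bdd L
  refine ⟨Real.exp B, fun x hx => ?_⟩
  by_contra h
  obtain ⟨hN, r, hr0, hr1, hNr, hw⟩ := gg_facts L hB h
  rw [norm_eq_sup'_normAtPlace] at hx
  obtain ⟨w, _, hw'⟩ := (Finset.lt_sup'_iff _).1 hx
  have := (hw w).2
  nlinarith [Real.exp_pos B]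
end
end

section
section
open NumberField NumberField.Units NumberField.Units.dirichletUnitTheorem NumberField.mixedEmbedding Module
open Classical
open scoped nonZeroDivisors

variable (L : Type*) [Field L] [NumberField L]

lemma tsum_fw {β γ : Type*} (f : β → ENNReal) (g : β → γ) :
    ∑' i, f i = ∑' x, ∑' b : {b // g b = x}, f b := by
  rw [← (Equiv.sigmaFiberEquiv g).tsum_eq f, ENNReal.tsum_sigma']
  rfl

lemma gg_zero : gg L 0 = 0 := by
  have : mixedEmbedding.norm (0 : mixedSpace L) = 0 := map_zero _
  rw [gg, this]; simp [psi]

lemma span_mk {C : ClassGroup (𝓞 L)} {J : (Ideal (𝓞 L))⁰} (hJ : ClassGroup.mk0 J = C⁻¹)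
    (I : (Ideal (𝓞 L))⁰) : ClassGroup.mk0 I = C ↔ ∃ α : 𝓞 L, (J : Ideal (𝓞 L)) * I = Ideal.span {α} := by
  have h1 : ClassGroup.mk0 I = C ↔ ClassGroup.mk0 (J * I) = 1 := by
    rw [map_mul, hJ, inv_mul_eq_one, eq_comm]
  have h2 := ClassGroup.mk0_eq_one_iff (J * I).2
  rw [h1, Subtype.coe_eta] at *
  rw [h2]
  constructor
  · rintro ⟨a, ha⟩
    exact ⟨a, ha⟩
  · rintro ⟨a, ha⟩
    exact ⟨a, ha⟩

lemma norm_alg (α : 𝓞 L) : mixedEmbedding.norm (mixedEmbedding L (α : L)) = Ideal.absNorm (Ideal.span {α}) := by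
  rw [mixedEmbedding.norm_eq_norm, Ideal.absNorm_span_singleton, ← Algebra.coe_norm_int]
  rw [Nat.cast_natAbs]
  push_cast
  rfl

lemma mem_lat (J : (Ideal (𝓞 L))⁰) (x : mixedSpace L) :
    x ∈ Submodule.span ℤ (Set.range (fractionalIdealLatticeBasis L (FractionalIdeal.mk0 L J))) ↔
      ∃ α : 𝓞 L, α ∈ (J : Ideal (𝓞 L)) ∧ mixedEmbedding L (α : L) = x := by
  rw [mem_span_fractionalIdealLatticeBasis, FractionalIdeal.coe_mk0]
  constructor
  · rintro ⟨a, ha, rfl⟩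
    obtain ⟨α, hα, rfl⟩ := (FractionalIdeal.mem_coeIdeal _).1 ha
    exact ⟨α, hα, rfl⟩
  · rintro ⟨α, hα, rfl⟩
    exact ⟨_, (FractionalIdeal.mem_coeIdeal _).2 ⟨α, hα, rfl⟩, rfl⟩

lemma class_sum {C : ClassGroup (𝓞 L)} {J : (Ideal (𝓞 L))⁰} (hJ : ClassGroup.mk0 J = C⁻¹)
    (M : Submodule ℤ (mixedSpace L)) (hM : ∀ x, x ∈ M ↔ ∃ α : 𝓞 L, α ∈ (J : Ideal (𝓞 L)) ∧ mixedEmbedding L (α : L) = x)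
    {t lam : ℝ} (hl : 0 < lam) (hlt : lam ^ finrank ℚ L * Ideal.absNorm (J : Ideal (𝓞 L)) = t) :
    ∑' l : M,
      ENNReal.ofReal (gg L (lam • (l : mixedSpace L))) =
    torsionOrder L * ∑' I : {I : (Ideal (𝓞 L))⁰ // ClassGroup.mk0 I = C},
      ENNReal.ofReal (psi (t * Ideal.absNorm (I : Ideal (𝓞 L)))) := by
  have hex : ∀ I : {I : (Ideal (𝓞 L))⁰ // ClassGroup.mk0 I = C}, ∃ α : 𝓞 L,
      (J : Ideal (𝓞 L)) * I = Ideal.span {α} := fun I => (span_mk L hJ I).1 I.2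
  choose A hA using hex
  have hA0 : ∀ I, A I ≠ 0 := by
    intro I h
    have h1 := hA I
    rw [h] at h1
    simp only [Ideal.span_singleton_zero] at h1
    have := (mul_ne_zero (nonZeroDivisors.coe_ne_zero J) (nonZeroDivisors.coe_ne_zero I.1))
    exact this h1
  have hsu : ∀ I (u : (𝓞 L)ˣ), Ideal.span {(u : 𝓞 L) * A I} = (J : Ideal (𝓞 L)) * I := by
    intro I u
    rw [hA, Ideal.span_singleton_mul_left_unit u.isUnit]
  have hmem : ∀ p : {I : (Ideal (𝓞 L))⁰ // ClassGroup.mk0 I = C} × (𝓞 L)ˣ,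
      mixedEmbedding L (((p.2 : 𝓞 L) * A p.1 : 𝓞 L) : L) ∈
      M := by
    intro p
    refine (hM _).2 ⟨_, ?_, rfl⟩
    have h0 : (J : Ideal (𝓞 L)) * (p.1.1 : Ideal (𝓞 L)) ≤ (J : Ideal (𝓞 L)) := Ideal.mul_le_left
    rw [← hsu p.1 p.2, Ideal.span_singleton_le_iff_mem] at h0
    exact h0
  let e : {I : (Ideal (𝓞 L))⁰ // ClassGroup.mk0 I = C} × (𝓞 L)ˣ →
      M :=
    fun p => ⟨_, hmem p⟩
  have he : Function.Injective e := by
    rintro ⟨I, u⟩ ⟨I', u'⟩ h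
    have h1 := congrArg Subtype.val h
    have h2 := mixedEmbedding_injective L h1
    have h3 : (u : 𝓞 L) * A I = (u' : 𝓞 L) * A I' := RingOfIntegers.ext h2
    have h4 : (J : Ideal (𝓞 L)) * I = (J : Ideal (𝓞 L)) * I' := by rw [← hsu I u, ← hsu I' u', h3]
    have h5 : I = I' := Subtype.ext (Subtype.ext (mul_left_cancel₀ (nonZeroDivisors.coe_ne_zero J) h4))
    subst h5
    have h6 := mul_right_cancel₀ (hA0 I) h3
    rw [Units.ext h6]
  have hsupp : Function.support (fun l : M =>
      ENNReal.ofReal (gg L (lam • (l : mixedSpace L)))) ⊆ Set.range e := by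
    rintro ⟨l, hl'⟩ hne
    obtain ⟨α, hα, rfl⟩ := (hM _).1 hl'
    have hα0 : α ≠ 0 := by
      rintro rfl
      apply hne
      simp [gg_zero]
    obtain ⟨I, hI⟩ := Ideal.dvd_iff_le.2 ((Ideal.span_singleton_le_iff_mem _).2 hα)
    have hI0 : I ∈ (Ideal (𝓞 L))⁰ := by
      rw [mem_nonZeroDivisors_iff_ne_zero]
      rintro rfl
      rw [mul_zero] at hI
      exact hα0 (Ideal.span_singleton_eq_bot.1 hI)
    let I' : {I : (Ideal (𝓞 L))⁰ // ClassGroup.mk0 I = C} := ⟨⟨I, hI0⟩, (span_mk L hJ _).2 ⟨α, hI.symm⟩⟩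
    have h1 : Ideal.span {A I'} = Ideal.span {α} := by rw [← hA I', hI]
    obtain ⟨u, hu⟩ := Ideal.span_singleton_eq_span_singleton.1 h1
    refine ⟨(I', u), Subtype.ext ?_⟩
    simp only [e]
    rw [mul_comm, hu]
  rw [← he.tsum_eq hsupp]
  have key : ∀ p, ENNReal.ofReal (gg L (lam • ((e p : _) : mixedSpace L))) =
      ENNReal.ofReal (psi (t * Ideal.absNorm (p.1.1 : Ideal (𝓞 L)))) *
        ENNReal.ofReal (tau L (logMap (p.2 • mixedEmbedding L (A p.1 : L)))) := by
    rintro ⟨I, u⟩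
    have e1 : ((e (I, u) : _) : mixedSpace L) = u • mixedEmbedding L (A I : L) := by
      simp only [e]
      rw [unitSMul_smul, ← map_mul]
      rfl
    have e2 : mixedEmbedding.norm ((e (I, u) : _) : mixedSpace L) =
        Ideal.absNorm (J : Ideal (𝓞 L)) * Ideal.absNorm (I.1 : Ideal (𝓞 L)) := by
      simp only [e]
      rw [norm_alg, hsu, map_mul]
      push_cast; rfl
    have e3 : mixedEmbedding.norm ((e (I, u) : _) : mixedSpace L) ≠ 0 := by
      rw [e2]
      have a1 := Ideal.absNorm_ne_zero_of_nonZeroDivisors J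
      have a2 := Ideal.absNorm_ne_zero_of_nonZeroDivisors I.1
      exact_mod_cast mul_ne_zero a1 a2
    rw [gg, logMap_real_smul e3 hl.ne', mixedEmbedding.norm_smul, e2, abs_of_pos hl, ← mul_assoc, hlt, e1,
      mul_comm, ENNReal.ofReal_mul']
    exact tau_nonneg _ _
  simp only [key]
  rw [ENNReal.tsum_prod (f := fun (I : {I : (Ideal (𝓞 L))⁰ // ClassGroup.mk0 I = C}) (u : (𝓞 L)ˣ) =>
    ENNReal.ofReal (psi (t * Ideal.absNorm (I.1 : Ideal (𝓞 L)))) *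
        ENNReal.ofReal (tau L (logMap (u • mixedEmbedding L (A I : L)))))]
  rw [← ENNReal.tsum_mul_left]
  refine tsum_congr fun I => ?_
  rw [ENNReal.tsum_mul_left, tau_sum L, mul_comm]
  rw [norm_alg, Nat.cast_ne_zero, ne_eq, Ideal.absNorm_eq_zero_iff, Ideal.span_singleton_eq_bot]
  exact hA0 I

lemma ideal_sum (t : ℝ) : ∑' n : ℕ, ENNReal.ofReal ((aL L n : ℝ) * psi (t * n)) =
    ∑ C : ClassGroup (𝓞 L), ∑' I : {I : (Ideal (𝓞 L))⁰ // ClassGroup.mk0 I = C},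
      ENNReal.ofReal (psi (t * Ideal.absNorm (I : Ideal (𝓞 L)))) := by
  have h1 := tsum_fw (fun I : (Ideal (𝓞 L))⁰ => ENNReal.ofReal (psi (t * Ideal.absNorm (I : Ideal (𝓞 L)))))
    ClassGroup.mk0
  rw [tsum_fintype (β := ClassGroup (𝓞 L))] at h1
  rw [← h1]
  have hi : Function.Injective (fun I : (Ideal (𝓞 L))⁰ => (I : Ideal (𝓞 L))) := Subtype.val_injective
  rw [hi.tsum_eq (f := fun I : Ideal (𝓞 L) => ENNReal.ofReal (psi (t * Ideal.absNorm I)))]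
  · rw [tsum_fw _ (fun I : Ideal (𝓞 L) => Ideal.absNorm I)]
    refine tsum_congr fun n => ?_
    have : ∀ b : {I : Ideal (𝓞 L) // Ideal.absNorm I = n},
        ENNReal.ofReal (psi (t * Ideal.absNorm (b : Ideal (𝓞 L)))) = ENNReal.ofReal (psi (t * n)) := by
      intro b; rw [b.2]
    rw [tsum_congr this, ENNReal.tsum_const]
    have : Finite {I : Ideal (𝓞 L) // Ideal.absNorm I = n} := Ideal.finite_setOfPred_absNorm_eq n
    rw [ENat.card_eq_coe_natCard, ENNReal.ofReal_mul (by positivity)]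
    simp [aL]
  · intro I hI
    refine ⟨⟨I, ?_⟩, rfl⟩
    rw [mem_nonZeroDivisors_iff_ne_zero]
    rintro rfl
    apply hI
    simp [psi]

lemma phi_bound : ∃ c C : ℝ, ∀ t : ℝ, 0 < t → t ≤ 1 →
    |∑' n : ℕ, (aL L n : ℝ) * (n * max 0 (1 - n * t)) - c * t ^ (-2:ℝ)| ≤
      C * t ^ (-2 + (finrank ℚ L : ℝ)⁻¹) := by
  have hJ : ∀ C : ClassGroup (𝓞 L), ∃ J : (Ideal (𝓞 L))⁰, ClassGroup.mk0 J = C⁻¹ := fun C =>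
    ClassGroup.mk0_surjective C⁻¹
  choose J hJ using hJ
  obtain ⟨K, hK⟩ := gg_lip L
  obtain ⟨R, hR⟩ := gg_supp L
  have hls := fun C => lattice_sum (fractionalIdealLatticeBasis L (FractionalIdeal.mk0 L (J C))) (gg L) K R hK hR
  choose c C hcC using hls
  set n : ℝ := (finrank ℚ L : ℝ) with hn
  have hn1 : 1 ≤ n := by rw [hn]; exact_mod_cast (finrank_pos (R := ℚ) (M := L))
  have hn0 : (finrank ℚ L) ≠ 0 := (finrank_pos (R := ℚ) (M := L)).ne'
  have htor : (0:ℝ) < torsionOrder L := by exact_mod_cast (Nat.pos_of_ne_zero (torsionOrder_ne_zero L))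
  let NJ : ClassGroup (𝓞 L) → ℝ := fun D => (Ideal.absNorm (J D : Ideal (𝓞 L)) : ℝ)
  have hNJ : ∀ D, 1 ≤ NJ D := fun D => by
    have := Ideal.absNorm_ne_zero_of_nonZeroDivisors (J D)
    simp only [NJ]
    exact_mod_cast Nat.one_le_iff_ne_zero.2 this
  refine ⟨(∑ D, c D * NJ D) / torsionOrder L, (∑ D, |C D| * NJ D) / torsionOrder L, fun t ht ht1 => ?_⟩
  let lam : ClassGroup (𝓞 L) → ℝ := fun D => (t / NJ D) ^ (n⁻¹)
  have hlp : ∀ D, 0 < lam D := fun D => Real.rpow_pos_of_pos (div_pos ht (by linarith [hNJ D])) _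
  have hlt : ∀ D, lam D ≤ t ^ n⁻¹ := fun D =>
    Real.rpow_le_rpow (div_pos ht (by linarith [hNJ D])).le (div_le_self ht.le (hNJ D)) (by positivity)
  have hl1 : ∀ D, lam D ≤ 1 := fun D => (hlt D).trans (Real.rpow_le_one ht.le ht1 (by positivity))
  have hlpow : ∀ D, lam D ^ (finrank ℚ L) = t / NJ D := fun D =>
    Real.rpow_inv_natCast_pow (div_pos ht (by linarith [hNJ D])).le hn0
  let S : ClassGroup (𝓞 L) → ℝ := fun D =>
    ∑' l : Submodule.span ℤ (Set.range (fractionalIdealLatticeBasis L (FractionalIdeal.mk0 L (J D)))),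
      gg L (lam D • (l : mixedSpace L))
  have hS0 : ∀ D, 0 ≤ S D := fun D => tsum_nonneg fun _ => gg_nonneg _ _
  have hcs : ∀ D, ENNReal.ofReal (S D) = torsionOrder L *
      ∑' I : {I : (Ideal (𝓞 L))⁰ // ClassGroup.mk0 I = D},
      ENNReal.ofReal (psi (t * Ideal.absNorm (I : Ideal (𝓞 L)))) := by
    intro D
    rw [← class_sum L (hJ D) _ (mem_lat L (J D)) (hlp D) (t := t), ENNReal.ofReal_tsum_of_nonneg (fun _ => gg_nonneg _ _)
      (hcC D (lam D) (hlp D) (hl1 D)).1]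
    rw [hlpow]
    have := hNJ D
    simp only [NJ] at *
    field_simp
  have hmain : (torsionOrder L : ENNReal) * ∑' k : ℕ, ENNReal.ofReal ((aL L k : ℝ) * psi (t * k)) =
      ENNReal.ofReal (∑ D, S D) := by
    rw [ideal_sum, Finset.mul_sum, ENNReal.ofReal_sum_of_nonneg (fun D _ => hS0 D)]
    exact Finset.sum_congr rfl fun D _ => (hcs D).symm
  have hreal : (torsionOrder L : ℝ) * (t * ∑' k : ℕ, (aL L k : ℝ) * (k * max 0 (1 - k * t))) = ∑ D, S D := by
    have h := congrArg ENNReal.toReal hmain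
    rw [ENNReal.toReal_mul, ENNReal.tsum_toReal_eq (fun _ => ENNReal.ofReal_ne_top),
      ENNReal.toReal_ofReal (Finset.sum_nonneg fun D _ => hS0 D), ENNReal.toReal_natCast] at h
    rw [← h, ← tsum_mul_left]
    congr 1
    refine tsum_congr fun k => ?_
    rw [ENNReal.toReal_ofReal]
    · unfold psi; rw [mul_comm t (k:ℝ)]; ring
    · exact mul_nonneg (by positivity) (psi_nonneg (by positivity))
  have hSb : ∀ D, |S D - c D * NJ D / t| ≤ |C D| * NJ D * t ^ n⁻¹ / t := by
    intro D
    have h := (hcC D (lam D) (hlp D) (hl1 D)).2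
    rw [mixedEmbedding.finrank, hlpow] at h
    have hN : 0 < NJ D := by linarith [hNJ D]
    have e : S D - c D * NJ D / t = (NJ D / t) * (t / NJ D * S D - c D) := by field_simp
    rw [e, abs_mul, abs_of_pos (div_pos hN ht)]
    calc _ ≤ NJ D / t * (|C D| * t ^ n⁻¹) := by
          refine mul_le_mul_of_nonneg_left (h.trans ?_) (by positivity)
          exact mul_le_mul (le_abs_self _) (hlt D) (hlp D).le (abs_nonneg _)
      _ = _ := by ring
  set Φ := ∑' k : ℕ, (aL L k : ℝ) * (k * max 0 (1 - k * t)) with hΦ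
  have e0 : t ^ (-2 + n⁻¹) = t ^ n⁻¹ / t / t := by
    rw [Real.rpow_add ht, Real.rpow_neg ht.le, Real.rpow_two]; field_simp
  have e1 : t ^ (-2:ℝ) = 1 / t / t := by
    rw [Real.rpow_neg ht.le, Real.rpow_two]; field_simp
  have e2 : Φ - (∑ D, c D * NJ D) / torsionOrder L * t ^ (-2:ℝ) =
      (∑ D, (S D - c D * NJ D / t)) / (torsionOrder L * t) := by
    rw [Finset.sum_sub_distrib, ← hreal, e1, ← Finset.sum_div]
    field_simp
  rw [e2, abs_div, abs_of_pos (by positivity : 0 < (torsionOrder L : ℝ) * t), e0, div_le_iff₀ (by positivity)]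
  refine (Finset.abs_sum_le_sum_abs _ _).trans ((Finset.sum_le_sum fun D _ => hSb D).trans (le_of_eq ?_))
  rw [← Finset.sum_div, ← Finset.sum_mul]
  field_simp

lemma cont : ∃ η : ℝ, 0 < η ∧ ∃ F : ℂ → ℂ, DifferentiableOn ℂ F {s | 1 - η < s.re} ∧
    ∀ s : ℂ, 1 < s.re → F s = (s - 1) * dedekindZeta L s := by
  obtain ⟨c, C, h⟩ := phi_bound L
  have hn1 : (1:ℝ) ≤ finrank ℚ L := by exact_mod_cast (finrank_pos (R := ℚ) (M := L))
  obtain ⟨F, h1, h2⟩ := cont_of (aL L) (fun s hs => zeta_summable hs) c C (finrank ℚ L : ℝ)⁻¹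
    (by positivity) (inv_le_one_of_one_le₀ hn1) h
  exact ⟨_, by positivity, F, h1, h2⟩
end
end

section
open NumberField Filter Topology

lemma tauberL (L : Type*) [Field L] [NumberField L] {ε : ℝ} (hε : 0 < ε) : ∃ c, 0 < c ∧ ∃ X₀ : ℝ,
    ∀ X, X₀ ≤ X → c ≤ ∑ n ∈ Finset.Icc ⌈X⌉₊ ⌊(1+ε)*X⌋₊, LamL L n / n := by
  obtain ⟨η, hη, F, hF, hFe⟩ := cont L
  have hU : IsOpen {s : ℂ | 1 - η < s.re} := isOpen_lt continuous_const Complex.continuous_re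
  have hF1 : F 1 ≠ 0 := by
    have hc : ContinuousAt F 1 :=
      (hF.differentiableAt (hU.mem_nhds (by simp [hη]))).continuousAt
    have h1 : Tendsto (fun s : ℝ => F s) (𝓝[>] 1) (𝓝 (F 1)) := by
      have : Tendsto (fun s : ℝ => (s : ℂ)) (𝓝[>] 1) (𝓝 1) := by
        have := (Complex.continuous_ofReal.tendsto 1).mono_left (nhdsWithin_le_nhds (s := Set.Ioi 1))
        simpa using this
      exact hc.tendsto.comp this
    have h2 := tendsto_sub_one_mul_dedekindZeta_nhdsGT L
    have h3 : Tendsto (fun s : ℝ => F s) (𝓝[>] 1) (𝓝 (dedekindZeta_residue L : ℂ)) := by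
      refine h2.congr' ?_
      filter_upwards [self_mem_nhdsWithin] with s hs
      rw [hFe s (by simpa using hs)]
    rw [tendsto_nhds_unique h1 h3]
    exact_mod_cast dedekindZeta_residue_ne_zero L
  have hD : ∀ s : ℂ, 1 < s.re →
      deriv F s = F s * (1/(s-1) - LSeries (fun n => (LamL L n:ℂ)) s) := by
    intro s hs
    have hs1 : s - 1 ≠ 0 := by
      intro h; have := congrArg Complex.re h; simp at this; linarith
    have hev : F =ᶠ[𝓝 s] fun z => (z - 1) * dedekindZeta L z := by
      filter_upwards [(isOpen_lt continuous_const Complex.continuous_re).mem_nhds hs] with z hz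
      exact hFe z hz
    rw [hev.deriv_eq, hFe s hs]
    have := ((hasDerivAt_id s).sub_const 1).mul (zeta_deriv (L := L) hs)
    have h2 := this.deriv
    simp only [id] at h2
    rw [show (fun z => (z - 1) * dedekindZeta L z) = (fun x => x - 1) * dedekindZeta L from rfl]
    rw [h2]
    field_simp
    ring
  obtain ⟨G, hG, hGe⟩ := nonvan (LamL L) LamL_nonneg (fun s hs => LamL_summable hs) η hη F hF hF1 hD
  exact tauber (LamL L) LamL_nonneg (fun s hs => LamL_summable hs) G hG hGe hε

lemma nonprime_small {c : ℝ} (hc : 0 < c) : ∃ N : ℕ, ∀ s : Finset ℕ, (∀ n ∈ s, N ≤ n ∧ ¬ n.Prime) →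
    ∑ n ∈ s, ArithmeticFunction.vonMangoldt n / n < c := by
  have h := ArithmeticFunction.vonMangoldt.summable_residueClass_non_primes_div (q := 1) 0
  rw [summable_iff_vanishing_norm] at h
  obtain ⟨S, hS⟩ := h c hc
  refine ⟨S.sup id + 1, fun s hs => ?_⟩
  have := hS s (by
    rw [Finset.disjoint_left]
    intro n hn hn'
    have h1 := (hs n hn).1
    have h2 := Finset.le_sup (f := id) hn'
    simp only [id] at h2
    omega)
  refine lt_of_le_of_lt (le_of_eq ?_) ((le_abs_self _).trans_lt this)
  refine Finset.sum_congr rfl fun n hn => ?_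
  rw [if_neg (hs n hn).2]
  congr 1
  rw [ArithmeticFunction.vonMangoldt.residueClass, Set.indicator_of_mem]
  exact Subsingleton.elim (α := ZMod 1) _ _

/-- The norms of the prime ideals `𝔭` of `𝓞_K` with `χ(N(𝔭)) = 1`, listed in non-decreasing
order, have consecutive ratios tending to `1`: for every `ε > 0` there is `X₀` such that every
real `X ≥ X₀` admits a prime ideal `𝔭` with `χ(N(𝔭)) = 1` and `X ≤ N(𝔭) ≤ (1+ε)X`. -/
theorem stmt6 (K : Type*) [Field K] [NumberField K] (m : ℕ) (hm : 0 < m)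
    (χ : DirichletCharacter ℂ m) :
    ∀ ε : ℝ, 0 < ε → ∃ X₀ : ℝ, ∀ X : ℝ, X₀ ≤ X →
      ∃ P : Ideal (𝓞 K), P.IsPrime ∧ P ≠ ⊥ ∧
        χ ((Ideal.absNorm P : ℕ) : ZMod m) = 1 ∧
        X ≤ (Ideal.absNorm P : ℝ) ∧ (Ideal.absNorm P : ℝ) ≤ (1 + ε) * X := by
  intro ε hε
  have : NeZero m := ⟨hm.ne'⟩
  let L := CyclotomicField m K
  obtain ⟨c, hc, X₁, hX₁⟩ := tauberL L hε
  set d : ℝ := ((Module.finrank ℚ L : ℕ) : ℝ) with hd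
  have hd0 : 0 < d := by
    rw [hd]; exact_mod_cast Module.finrank_pos
  obtain ⟨N, hN⟩ := nonprime_small (c := c / d) (by positivity)
  refine ⟨max (max X₁ N) (Units.torsionOrder L + 1), fun X hX => ?_⟩
  have hX1 : X₁ ≤ X := (le_max_left _ _).trans ((le_max_left _ _).trans hX)
  have hX2 : N ≤ X := (le_max_right _ _).trans ((le_max_left _ _).trans hX)
  have hX3 : Units.torsionOrder L + 1 ≤ X := (le_max_right _ _).trans hX
  have hX0 : 0 < X := by
    have : (0:ℝ) ≤ Units.torsionOrder L := Nat.cast_nonneg _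
    linarith
  have hsum := hX₁ X hX1
  by_contra hcon
  have hz : ∀ n ∈ Finset.Icc ⌈X⌉₊ ⌊(1+ε)*X⌋₊, n.Prime → LamL L n = 0 := by
    intro n hn hp
    by_contra hne
    apply hcon
    rw [Finset.mem_Icc, Nat.ceil_le, Nat.le_floor_iff (by positivity)] at hn
    obtain ⟨⟨Q, k⟩, hq, -⟩ := Finset.exists_ne_zero_of_sum_ne_zero hne
    have hq : (Q, k) ∈ PP L n := by simpa using hq
    obtain ⟨hQ1, hQ2, hQ3⟩ := hq
    simp only at hQ1 hQ2 hQ3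
    have hQ : Ideal.absNorm Q = n := by
      have : Ideal.absNorm Q ∣ n := by rw [← hQ3]; exact dvd_pow_self _ (by omega)
      rcases (Nat.dvd_prime hp).1 this with h | h
      · have := two_le_absNorm hQ1 hQ2; omega
      · exact h
    let P : Ideal (𝓞 K) := Q.under (𝓞 K)
    have hP1 : P.IsPrime := inferInstance
    have hP2 : P ≠ ⊥ := Ideal.under_ne_bot _ hQ2
    have hlo : Q.LiesOver P := ⟨rfl⟩
    have hf := Ideal.absNorm_eq_pow_inertiaDeg'_of_liesOver Q P hP1 hP2
    have hPn : Ideal.absNorm P = n := by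
      have h2 := two_le_absNorm hP1 hP2
      have hne0 : Ideal.inertiaDeg' P Q ≠ 0 := by
        intro h0; rw [h0, pow_zero] at hf
        have := hp.two_le; omega
      have : Ideal.absNorm P ∣ n := by rw [← hQ, hf]; exact dvd_pow_self _ hne0
      rcases (Nat.dvd_prime hp).1 this with h | h
      · omega
      · exact h
    refine ⟨P, hP1, hP2, ?_, by rw [hPn]; exact hn.1, by rw [hPn]; exact hn.2⟩
    have hcop : (Ideal.absNorm Q).Coprime (Units.torsionOrder L) := by
      rw [hQ, Nat.Prime.coprime_iff_not_dvd hp]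
      intro hdv
      have h1 := Nat.le_of_dvd (Units.torsionOrder_pos L) hdv
      have h2 : (n:ℝ) ≤ Units.torsionOrder L := by exact_mod_cast h1
      linarith [hn.1]
    have h1 := torsionOrder_dvd_absNorm_sub_one hQ2 hQ1 hcop
    have h2 : m ∣ Units.torsionOrder L :=
      Units.dvd_torsionOrder_of_isPrimitiveRoot (IsCyclotomicExtension.zeta_spec m K L)
    have h3 := h2.trans h1
    rw [hQ] at h3
    have h4 : ((n : ℕ) : ZMod m) = 1 := by
      have := (ZMod.natCast_eq_zero_iff _ _).2 h3
      rw [Nat.cast_sub hp.one_lt.le] at this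
      simpa [sub_eq_zero] using this
    rw [hPn, h4, map_one]
  have hle : ∑ n ∈ Finset.Icc ⌈X⌉₊ ⌊(1+ε)*X⌋₊, LamL L n / n ≤
      ∑ n ∈ (Finset.Icc ⌈X⌉₊ ⌊(1+ε)*X⌋₊).filter (fun n => ¬ n.Prime),
        d * (ArithmeticFunction.vonMangoldt n / n) := by
    rw [Finset.sum_filter]
    refine Finset.sum_le_sum fun n hn => ?_
    by_cases hp : n.Prime
    · simp [hp, hz n hn hp]
    · simp only [hp, not_false_eq_true, if_true]
      rw [← mul_div_assoc]
      gcongr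
      exact LamL_le n
  rw [← Finset.mul_sum] at hle
  have := hN ((Finset.Icc ⌈X⌉₊ ⌊(1+ε)*X⌋₊).filter (fun n => ¬ n.Prime)) (by
    intro n hn
    rw [Finset.mem_filter, Finset.mem_Icc, Nat.ceil_le] at hn
    exact ⟨by exact_mod_cast hX2.trans hn.1.1, hn.2⟩)
  rw [lt_div_iff₀ hd0] at this
  linarith
end
end

section
/- Fix a real number r > 1. With p_j the j-th prime, ζ_i(r) = ∏_{k>i} (1 − p_k^{-r})^{-1}, j₁ the least positive integer j₀ such that ζ_j(r) ≥ 1 + p_j^{-r} for all integers j > j₀, ℓ = max(2, j₁), i₀ = j₁ if j₁ ≥ 2 and otherwise i₀ = the least positive integer i with ζ_i(r) < 1 + 3^{-r}, and m_i = (∏_{p ≤ p_i} p)/p_ℓ with χ_{m_i} the principal Dirichlet character modulo m_i: for every integer i ≥ i₀, the closure of σ_{r,ℚ,χ_{m_i}}(ℕ) has exactly ⌈ log((ζ_i(r) − 1)/(ζ_i(r) − p_ℓ^{-r})) / log(p_ℓ^{-r}) ⌉ connected components; moreover the sequence (C_{r,ℚ,χ_{m_i}})_{i ≥ i₀} is non-decreasing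 and tends to infinity. -/
/-- The twisted divisor function `σ_{r,ℚ,χ}(n) = ∑_{d ∣ n} χ(d) d^{-r}` on positive integers,
for a real-valued Dirichlet character. -/
noncomputable def sigmaQ {m : ℕ} (χ : DirichletCharacter ℝ m) (r : ℝ) (n : ℕ) : ℝ :=
  ∑ d ∈ n.divisors, χ ((d : ℕ) : ZMod m) * (d : ℝ) ^ (-r)

/-- `p_j`, the `j`-th rational prime (`1`-indexed: `pr 1 = 2`, `pr 2 = 3`, …). -/
noncomputable def pr (j : ℕ) : ℕ := Nat.nth Nat.Prime (j - 1)

/-- `ζ_i(r) = ∏_{k > i} (1 − p_k^{-r})⁻¹`. -/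
noncomputable def zetaTail (r : ℝ) (i : ℕ) : ℝ :=
  ∏' k : {k : ℕ // i < k}, (1 - (pr (k : ℕ) : ℝ) ^ (-r))⁻¹

/-- `C_{r,ℚ,χ_m}` for the principal character `χ_m` modulo `m`: the number of connected
components of the closure of the image of `σ_{r,ℚ,χ_m}` on positive integers. -/
noncomputable def Cprin (r : ℝ) (m : ℕ) : ℕ :=
  Nat.card (ConnectedComponents
    ↥(closure (sigmaQ (1 : DirichletCharacter ℝ m) r '' {k : ℕ | 0 < k})))

open Filter Topology

lemma pr_prime (j : ℕ) : (pr j).Prime := Nat.prime_nth_prime _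

lemma pr_inj {a b : ℕ} (ha : 1 ≤ a) (hb : 1 ≤ b) (h : pr a = pr b) : a = b := by
  have := Nat.nth_injective Nat.infinite_setOfPred_prime h
  omega

lemma lt_pr (j : ℕ) : j < pr j := by
  have := Nat.add_two_le_nth_prime (j-1)
  unfold pr; omega

lemma exists_pr {p : ℕ} (hp : p.Prime) : ∃ k, 1 ≤ k ∧ pr k = p := by
  refine ⟨Nat.count Nat.Prime p + 1, by omega, ?_⟩
  simp [pr, Nat.nth_count hp]

lemma x_pos (r : ℝ) (j : ℕ) : 0 < (pr j : ℝ) ^ (-r) :=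
  Real.rpow_pos_of_pos (by exact_mod_cast (pr_prime j).pos) _

lemma x_lt (r : ℝ) (hr : 1 < r) (j : ℕ) : (pr j : ℝ) ^ (-r) < 1 :=
  Real.rpow_lt_one_of_one_lt_of_neg (by exact_mod_cast (pr_prime j).one_lt) (by linarith)

lemma x_half (r : ℝ) (hr : 1 < r) (j : ℕ) : (pr j : ℝ) ^ (-r) ≤ 1/2 := by
  have h2 : (2:ℝ) ≤ pr j := by exact_mod_cast (pr_prime j).two_le
  calc (pr j : ℝ) ^ (-r) ≤ (pr j : ℝ) ^ (-1:ℝ) :=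
        Real.rpow_le_rpow_of_exponent_le (by linarith) (by linarith)
    _ = (pr j : ℝ)⁻¹ := Real.rpow_neg_one _
    _ ≤ 1/2 := by rw [one_div]; gcongr

noncomputable def ff (r : ℝ) (k : ℕ) : ℝ := (1 - (pr (k+1) : ℝ) ^ (-r))⁻¹

lemma ff_mult (r : ℝ) (hr : 1 < r) (i : ℕ) : Multipliable (fun k => ff r (k + i)) := by
  have hs : Summable (fun k : ℕ => (pr (k+i+1) : ℝ) ^ (-r)) := by
    have h0 : Summable (fun n : ℕ => (n:ℝ) ^ (-r)) :=
      Real.summable_nat_rpow.mpr (by linarith)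
    refine h0.comp_injective (i := fun k : ℕ => pr (k+i+1)) ?_
    intro a b h
    have := pr_inj (by omega) (by omega) h
    omega
  have h1 : Summable (fun k : ℕ => ff r (k+i) - 1) := by
    refine Summable.of_nonneg_of_le ?_ ?_ (hs.mul_left 2)
    · intro k
      have := x_pos r (k+i+1); have h2 := x_lt r hr (k+i+1)
      unfold ff
      have : 1 ≤ (1 - (pr (k+i+1) : ℝ) ^ (-r))⁻¹ := (one_le_inv₀ (by linarith)).2 (by linarith)
      linarith
    · intro k
      have := x_pos r (k+i+1); have h2 := x_half r hr (k+i+1)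
      unfold ff
      rw [sub_le_iff_le_add, inv_le_iff_one_le_mul₀ (by linarith)]
      nlinarith
  have := Real.multipliable_one_add_of_summable h1
  simpa using this

lemma zt_eq (r : ℝ) (i : ℕ) : zetaTail r i = ∏' k, ff r (k + i) := by
  unfold zetaTail
  let e : ℕ ≃ {k : ℕ // i < k} :=
    { toFun := fun k => ⟨k+i+1, by omega⟩
      invFun := fun k => k.1 - i - 1
      left_inv := fun k => by simp; omega
      right_inv := fun k => by
        obtain ⟨k, hk⟩ := k
        ext; simp; omega }
  rw [← e.tprod_eq]
  rfl

lemma ff_gt (r : ℝ) (hr : 1 < r) (i : ℕ) : 1 < ff r i := by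
  have := x_pos r (i+1); have h2 := x_lt r hr (i+1)
  exact (one_lt_inv₀ (by linarith)).2 (by linarith)

lemma zt_succ (r : ℝ) (hr : 1 < r) (i : ℕ) :
    zetaTail r i = (1 - (pr (i+1) : ℝ) ^ (-r))⁻¹ * zetaTail r (i+1) := by
  rw [zt_eq, zt_eq]
  have h : Multipliable (fun k => ff r ((k + 1) + i)) := by
    have := ff_mult r hr (i+1)
    refine this.congr fun k => ?_
    rw [show k + 1 + i = k + (i+1) by omega]
  have h2 := tprod_eq_zero_mul' (f := fun k => ff r (k + i)) h
  rw [h2]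
  have h3 : ∀ k, ff r (k + 1 + i) = ff r (k + (i+1)) := fun k => by
    rw [show k + 1 + i = k + (i+1) by omega]
  simp only [h3, zero_add]
  rfl

lemma zt_ge (r : ℝ) (hr : 1 < r) (i : ℕ) : 1 ≤ zetaTail r i := by
  rw [zt_eq]
  have := (ff_mult r hr i).tendsto_prod_tprod_nat
  refine ge_of_tendsto' this fun n => ?_
  induction n with
  | zero => simp
  | succ n ih =>
    rw [Finset.prod_range_succ]
    have := ff_gt r hr (n+i)
    nlinarith

lemma zt_gt (r : ℝ) (hr : 1 < r) (i : ℕ) : 1 < zetaTail r i := by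
  rw [zt_succ r hr]
  have := ff_gt r hr i
  have h2 := zt_ge r hr (i+1)
  unfold ff at this
  nlinarith

lemma zt_anti (r : ℝ) (hr : 1 < r) : Antitone (zetaTail r) := by
  refine antitone_nat_of_succ_le fun i => ?_
  rw [zt_succ r hr i]
  have := ff_gt r hr i
  have h2 := zt_ge r hr (i+1)
  unfold ff at this
  nlinarith

lemma zt_lim (r : ℝ) (hr : 1 < r) : Tendsto (zetaTail r) atTop (𝓝 1) := by
  have h0 := (ff_mult r hr 0).tendsto_prod_tprod_nat
  have h1 := zt_gt r hr 0
  rw [← zt_eq] at h0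
  have h2 : ∀ n, (∏ k ∈ Finset.range n, ff r (k+0)) * zetaTail r n = zetaTail r 0 := by
    intro n
    induction n with
    | zero => simp
    | succ n ih =>
      rw [← ih, zt_succ r hr n, Finset.prod_range_succ]
      simp [ff]; ring
  have h3 : Tendsto (fun n => zetaTail r 0 / (∏ k ∈ Finset.range n, ff r (k+0))) atTop
      (𝓝 (zetaTail r 0 / zetaTail r 0)) := tendsto_const_nhds.div h0 (by linarith)
  rw [div_self (by linarith)] at h3
  refine h3.congr fun n => ?_
  have : 0 < ∏ k ∈ Finset.range n, ff r (k+0) :=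
    Finset.prod_pos fun k _ => by linarith [ff_gt r hr (k+0)]
  rw [← h2 n]; field_simp

/-- geometric partial sums -/
noncomputable def ss (q : ℝ) (a : ℕ) : ℝ := (1 - q^(a+1)) / (1 - q)

lemma ss_zero {q : ℝ} (h1 : q < 1) : ss q 0 = 1 := by
  unfold ss; rw [zero_add, pow_one]; exact div_self (by linarith)

lemma ss_mono {q : ℝ} (h0 : 0 < q) (h1 : q < 1) : StrictMono (ss q) := by
  intro a b hab
  unfold ss
  have : q^(b+1) < q^(a+1) := pow_lt_pow_right_of_lt_one₀ h0 h1 (by omega)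
  have : 0 < 1 - q := by linarith
  gcongr

lemma ss_lt {q : ℝ} (h0 : 0 < q) (h1 : q < 1) (a : ℕ) : ss q a < (1-q)⁻¹ := by
  unfold ss
  have : 0 < q^(a+1) := by positivity
  have : 0 < 1 - q := by linarith
  rw [div_eq_mul_inv]
  exact mul_lt_of_lt_one_left (by positivity) (by linarith)

lemma ss_ge {q : ℝ} (h0 : 0 < q) (h1 : q < 1) (a : ℕ) : 1 ≤ ss q a := by
  rw [← ss_zero h1]; exact (ss_mono h0 h1).monotone (Nat.zero_le _)

lemma ss_lim {q : ℝ} (h0 : 0 < q) (h1 : q < 1) : Tendsto (ss q) atTop (𝓝 (1-q)⁻¹) := by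
  have h := (tendsto_pow_atTop_nhds_zero_of_lt_one h0.le h1).comp (tendsto_add_atTop_nat 1)
  have := (h.const_sub 1).div_const (1-q)
  simpa [ss, Function.comp_def, funext_iff, show ss q = fun a => (1 - q^(a+1)) / (1 - q) from rfl] using this

lemma ss_cond {q Z : ℝ} (h1 : q < 1) (hZ : 1 < Z) (a : ℕ) :
    ss q (a+1) ≤ ss q a * Z ↔ q^(a+1) ≤ (Z-1)/(Z-q) := by
  unfold ss
  have : 0 < 1 - q := by linarith
  rw [le_div_iff₀ (by linarith), div_mul_eq_mul_div, div_le_div_iff_of_pos_right this]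
  ring_nf
  constructor <;> intro h <;> linarith

/-- covering lemma -/
lemma cover {q Z : ℝ} (h0 : 0 < q) (h1 : q < 1) (hZ : 1 < Z) (A : ℕ)
    (hA : ss q (A+1) ≤ ss q A * Z) {y : ℝ} (hy : ss q A ≤ y) (hy2 : y < (1-q)⁻¹ * Z) :
    ∃ a, ss q a ≤ y ∧ y < ss q a * Z := by
  have hcond : ∀ a, A ≤ a → ss q (a+1) ≤ ss q a * Z := by
    intro a ha
    rw [ss_cond h1 hZ] at hA ⊢
    exact (pow_le_pow_of_le_one h0.le h1.le (by omega)).trans hA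
  have hex : ∃ a, A ≤ a ∧ y < ss q a * Z := by
    have := (((ss_lim h0 h1).mul_const Z).eventually_const_lt hy2).and (eventually_ge_atTop A)
    obtain ⟨a, ha⟩ := this.exists
    exact ⟨a, ha.2, ha.1⟩
  classical
  refine ⟨Nat.find hex, ?_, (Nat.find_spec hex).2⟩
  by_cases h : Nat.find hex ≤ A
  · have := (Nat.find_spec hex).1
    rwa [le_antisymm h this]
  · push Not at h
    have hm := Nat.find_min hex (m := Nat.find hex - 1) (by omega)
    have hle : A ≤ Nat.find hex - 1 := by omega
    have h3 := hcond _ hle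
    rw [Nat.sub_add_cancel (by omega)] at h3
    push Not at hm
    exact h3.trans (hm hle)

/-- counting components -/
lemma card_comp (N : ℕ) (lo hi : ℕ → ℝ) (X : Set ℝ)
    (hX : X = ⋃ a : Fin (N+1), Set.Icc (lo a) (hi a))
    (h1 : ∀ a, a ≤ N → lo a ≤ hi a) (h2 : ∀ a, a < N → hi a < lo (a+1)) :
    Nat.card (ConnectedComponents X) = N + 1 := by
  have hlt : ∀ b, b ≤ N → ∀ a, a < b → hi a < lo b := by
    intro b
    induction b with
    | zero => intro _ a ha; omega
    | succ b ih =>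
      intro hb a ha
      rcases Nat.lt_succ_iff_lt_or_eq.1 ha with h | rfl
      · exact (ih (by omega) a h).trans_le ((h1 b (by omega)).trans (h2 b (by omega)).le)
      · exact h2 a (by omega)
  have hex : ∀ x : X, ∃ a : Fin (N+1), (x:ℝ) ∈ Set.Icc (lo a) (hi a) := by
    rintro ⟨x, hx⟩
    rw [hX] at hx
    simpa using hx
  choose f hf using hex
  have huniq : ∀ (x : X) (a : Fin (N+1)), (x:ℝ) ∈ Set.Icc (lo a) (hi a) → f x = a := by
    intro x a ha
    rcases lt_trichotomy (f x) a with h | h | h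
    · have := hlt a (by omega) (f x) h
      linarith [(hf x).2, ha.1]
    · exact h
    · have := hlt (f x) (by omega) a h
      linarith [(hf x).1, ha.2]
  have hfib : ∀ a : Fin (N+1), f ⁻¹' {a} = (Subtype.val : X → ℝ) ⁻¹' Set.Icc (lo a) (hi a) := by
    intro a; ext x
    constructor
    · rintro rfl; exact hf x
    · exact huniq x a
  have hcont : Continuous f := by
    rw [continuous_iff_isClosed]
    intro s _
    have : f ⁻¹' s = ⋃ a ∈ s, f ⁻¹' {a} := by ext; simp
    rw [this]
    refine (Set.toFinite s).isClosed_biUnion fun a _ => ?_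
    rw [hfib]
    exact isClosed_Icc.preimage continuous_subtype_val
  have hb : Function.Bijective hcont.connectedComponentsLift := by
    constructor
    · intro x y
      induction x using Quotient.inductionOn
      induction y using Quotient.inductionOn
      rename_i x y
      intro h
      change f x = f y at h
      refine ConnectedComponents.coe_eq_coe'.2 ?_
      have hpre : IsPreconnected (f ⁻¹' {f y}) := by
        rw [hfib]
        refine Topology.IsInducing.subtypeVal.isPreconnected_image.1 ?_
        rw [Subtype.image_preimage_coe, Set.inter_eq_right.2]
        · exact isPreconnected_Icc
        · rw [hX]; exact Set.subset_iUnion (fun a : Fin (N+1) => Set.Icc (lo a) (hi a)) (f y)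
      exact hpre.subset_connectedComponent (x := y) rfl h
    · intro a
      have hm : lo a ∈ X := by
        rw [hX]; exact Set.mem_iUnion.2 ⟨a, le_rfl, h1 a (by omega)⟩
      refine ⟨((⟨lo a, hm⟩ : X) : ConnectedComponents X), ?_⟩
      exact huniq ⟨lo a, hm⟩ a ⟨le_rfl, h1 a (by omega)⟩
  rw [Nat.card_congr (Equiv.ofBijective _ hb)]
  simp

lemma chi_apply (m d : ℕ) : (1 : DirichletCharacter ℝ m) ((d : ℕ) : ZMod m) =
    if d.Coprime m then 1 else 0 := by
  split_ifs with h
  · exact MulChar.one_apply ((ZMod.isUnit_iff_coprime d m).2 h)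
  · exact MulChar.map_nonunit _ (fun h' => h ((ZMod.isUnit_iff_coprime d m).1 h'))

lemma sig_mul (m : ℕ) (r : ℝ) {a b : ℕ} (h : a.Coprime b) :
    sigmaQ (1 : DirichletCharacter ℝ m) r (a*b) =
      sigmaQ (1 : DirichletCharacter ℝ m) r a * sigmaQ (1 : DirichletCharacter ℝ m) r b := by
  unfold sigmaQ
  rw [Nat.divisors_mul, Finset.mul_def, Finset.sum_image h.mul_injOn_divisors,
    Finset.sum_mul_sum, ← Finset.sum_product']
  refine Finset.sum_congr rfl fun p _ => ?_
  push_cast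
  rw [map_mul, Real.mul_rpow (by positivity) (by positivity)]
  ring

lemma sig_pow (m : ℕ) (r : ℝ) {p : ℕ} (hp : p.Prime) (hr : (p:ℝ)^(-r) < 1) (h : p.Coprime m) (a : ℕ) :
    sigmaQ (1 : DirichletCharacter ℝ m) r (p^a) = ss ((p:ℝ)^(-r)) a := by
  unfold sigmaQ ss
  rw [Nat.sum_divisors_prime_pow hp]
  have : ∀ k ∈ Finset.range (a+1), (1 : DirichletCharacter ℝ m) (((p^k : ℕ)) : ZMod m) *
      ((p^k : ℕ) : ℝ)^(-r) = ((p:ℝ)^(-r))^k := by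
    intro k _
    rw [chi_apply, if_pos (h.pow_left k), one_mul, Nat.cast_pow, ← Real.rpow_natCast,
      ← Real.rpow_natCast, ← Real.rpow_mul (by positivity), ← Real.rpow_mul (by positivity), mul_comm]
  rw [Finset.sum_congr rfl this, geom_sum_eq hr.ne, ← neg_div_neg_eq]
  ring

lemma sig_ge (m : ℕ) (r : ℝ) {n : ℕ} (hn : 0 < n) :
    1 ≤ sigmaQ (1 : DirichletCharacter ℝ m) r n := by
  unfold sigmaQ
  have := Finset.single_le_sum (s := n.divisors)
    (f := fun d : ℕ => (1 : DirichletCharacter ℝ m) ((d : ℕ) : ZMod m) * (d : ℝ) ^ (-r))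
    (fun d _ => by
      rw [chi_apply]; split_ifs <;> positivity) (Nat.one_mem_divisors.2 hn.ne')
  simpa using this

lemma sig_one (m : ℕ) (r : ℝ) {n : ℕ} (hn : 0 < n) (h : ∀ p, p.Prime → p ∣ n → p ∣ m) :
    sigmaQ (1 : DirichletCharacter ℝ m) r n = 1 := by
  unfold sigmaQ
  rw [Finset.sum_eq_single_of_mem 1 (Nat.one_mem_divisors.2 hn.ne')]
  · simp
  · intro d hd h1
    obtain ⟨p, hp, hpd⟩ := Nat.exists_prime_and_dvd h1
    rw [chi_apply, if_neg, zero_mul]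
    intro hc
    have := Nat.dvd_gcd hpd (h p hp (hpd.trans (Nat.dvd_of_mem_divisors hd)))
    rw [hc.gcd_eq_one] at this
    exact hp.one_lt.ne' (Nat.dvd_one.1 this)

noncomputable def mm (i ℓ : ℕ) : ℕ := ∏ k ∈ (Finset.Icc 1 i).erase ℓ, pr k

lemma cop_pr {a b : ℕ} (ha : 1 ≤ a) (hb : 1 ≤ b) (h : a ≠ b) : (pr a).Coprime (pr b) :=
  (Nat.coprime_primes (pr_prime a) (pr_prime b)).2 fun h' => h (pr_inj ha hb h')

lemma cop_m {i ℓ k : ℕ} (hk : 1 ≤ k) (h : k = ℓ ∨ i < k) : (pr k).Coprime (mm i ℓ) := by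
  refine Nat.Coprime.prod_right fun j hj => ?_
  simp only [Finset.mem_erase, Finset.mem_Icc] at hj
  exact cop_pr hk hj.2.1 (by omega)

lemma dvd_m {i ℓ k : ℕ} (hk : 1 ≤ k) (h : k ≤ i) (h2 : k ≠ ℓ) : pr k ∣ mm i ℓ :=
  Finset.dvd_prod_of_mem pr (by simp; omega)

lemma upper (r : ℝ) (hr : 1 < r) (i ℓ : ℕ) (N : ℕ) (hN : i ≤ N) : ∀ n : ℕ, 0 < n →
    ¬ pr ℓ ∣ n → (∀ k, N < k → ¬ pr k ∣ n) →
    sigmaQ (1 : DirichletCharacter ℝ (mm i ℓ)) r n * zetaTail r N ≤ zetaTail r i := by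
  induction N, hN using Nat.le_induction with
  | base =>
    intro n hn h1 h2
    rw [sig_one _ _ hn, one_mul]
    intro p hp hpn
    obtain ⟨k, hk, rfl⟩ := exists_pr hp
    refine dvd_m hk ?_ ?_
    · by_contra h; exact h2 k (by omega) hpn
    · rintro rfl; exact h1 hpn
  | succ N hN ih =>
    intro n hn h1 h2
    obtain ⟨a, n', hn', rfl⟩ :=
      Nat.exists_eq_pow_mul_and_not_dvd hn.ne' (pr (N+1)) (pr_prime _).ne_one
    have hn0 : 0 < n' := Nat.pos_of_ne_zero (by rintro rfl; simp at hn')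
    have hx := x_pos r (N+1)
    have hx1 := x_lt r hr (N+1)
    rw [sig_mul, sig_pow _ _ (pr_prime _) hx1 (cop_m (by omega) (by omega))]
    · have := ih n' hn0 (fun h => h1 (h.mul_left _)) (by
        intro k hk h
        rcases Nat.lt_or_ge (N+1) k with h3 | h3
        · exact h2 k h3 (h.mul_left _)
        · obtain rfl : k = N+1 := by omega
          exact hn' h)
      refine le_trans ?_ this
      rw [zt_succ r hr N]
      have e1 := ss_lt hx hx1 a
      have e2 := sig_ge (mm i ℓ) r hn0
      have e3 := zt_gt r hr (N+1)
      have e4 : 0 ≤ sigmaQ (1 : DirichletCharacter ℝ (mm i ℓ)) r n' * zetaTail r (N+1) := by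
        positivity
      nlinarith
    · exact ((pr_prime _).coprime_iff_not_dvd.2 hn').pow_left a

lemma upper' (r : ℝ) (hr : 1 < r) (i ℓ : ℕ) {n : ℕ} (hn : 0 < n) (h : ¬ pr ℓ ∣ n) :
    sigmaQ (1 : DirichletCharacter ℝ (mm i ℓ)) r n ≤ zetaTail r i := by
  have := upper r hr i ℓ (max i n) (le_max_left _ _) n hn h (by
    intro k hk hd
    have := Nat.le_of_dvd hn hd
    have := lt_pr k
    omega)
  have e2 := sig_ge (mm i ℓ) r hn
  have e3 := zt_gt r hr (max i n)
  nlinarith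

lemma lower (r : ℝ) (hr : 1 < r) (i ℓ : ℕ) (hl : 1 ≤ ℓ) (hli : ℓ ≤ i)
    (hT : ∀ j, i < j → 1 + (pr j : ℝ) ^ (-r) ≤ zetaTail r j) {y : ℝ} {a : ℕ}
    (hy : ss ((pr ℓ : ℝ) ^ (-r)) a ≤ y) (hy2 : y < ss ((pr ℓ : ℝ) ^ (-r)) a * zetaTail r i) :
    y ∈ closure (sigmaQ (1 : DirichletCharacter ℝ (mm i ℓ)) r '' {k : ℕ | 0 < k}) := by
  have key : ∀ N, i ≤ N → ∃ n : ℕ, 0 < n ∧ (∀ k, N < k → n.Coprime (pr k)) ∧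
      sigmaQ (1 : DirichletCharacter ℝ (mm i ℓ)) r n ≤ y ∧
      y < sigmaQ (1 : DirichletCharacter ℝ (mm i ℓ)) r n * zetaTail r N := by
    intro N hN
    induction N, hN using Nat.le_induction with
    | base =>
      refine ⟨pr ℓ ^ a, pow_pos (pr_prime _).pos _, ?_, ?_⟩
      · intro k hk
        exact (cop_pr hl (by omega) (by omega)).pow_left a
      · rw [sig_pow _ _ (pr_prime _) (x_lt r hr _) (cop_m hl (Or.inl rfl))]
        exact ⟨hy, hy2⟩
    | succ N hN ih =>
      obtain ⟨n, hn, hc, h1, h2⟩ := ih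
      have hx := x_pos r (N+1)
      have hx1 := x_lt r hr (N+1)
      have hs := sig_ge (mm i ℓ) r hn
      have hs0 : 0 < sigmaQ (1 : DirichletCharacter ℝ (mm i ℓ)) r n := by linarith
      rw [zt_succ r hr N] at h2
      obtain ⟨b, hb1, hb2⟩ := cover hx hx1 (zt_gt r hr (N+1)) 0 (by
        rw [ss_zero hx1, one_mul]
        refine le_trans (le_of_eq ?_) (hT (N+1) (by omega))
        unfold ss
        rw [div_eq_iff (by linarith)]; ring)
        (y := y / sigmaQ (1 : DirichletCharacter ℝ (mm i ℓ)) r n)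
        (by rw [ss_zero hx1, le_div_iff₀ hs0]; linarith)
        (by rw [div_lt_iff₀ hs0]; linarith)
      rw [le_div_iff₀ hs0] at hb1
      rw [div_lt_iff₀ hs0] at hb2
      refine ⟨n * pr (N+1)^b, mul_pos hn (pow_pos (pr_prime _).pos _), ?_, ?_⟩
      · intro k hk
        exact (hc k (by omega)).mul_left ((cop_pr (by omega) (by omega) (by omega)).pow_left b)
      · rw [sig_mul _ _ ((hc (N+1) (by omega)).pow_right b),
          sig_pow _ _ (pr_prime _) hx1 (cop_m (by omega) (by omega))]
        constructor <;> linarith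
  have hy0 : 0 < y := by
    have := ss_ge (x_pos r ℓ) (x_lt r hr ℓ) a
    linarith
  rw [Metric.mem_closure_iff]
  intro ε hε
  have h1 : ∀ᶠ N in atTop, zetaTail r N < 1 + ε / y :=
    (zt_lim r hr).eventually_lt_const (by have := div_pos hε hy0; linarith)
  obtain ⟨N, hN1, hN2⟩ := (h1.and (eventually_ge_atTop i)).exists
  obtain ⟨n, hn, -, h2, h3⟩ := key N hN2
  refine ⟨_, ⟨n, hn, rfl⟩, ?_⟩
  rw [Real.dist_eq, abs_of_nonneg (by linarith)]
  have hs := sig_ge (mm i ℓ) r hn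
  have hz := zt_gt r hr N
  have h4 : ε / y * y = ε := by field_simp
  nlinarith [mul_le_mul_of_nonneg_right h2 (by linarith : 0 ≤ zetaTail r N - 1),
    mul_lt_mul_of_pos_left hN1 hy0]

lemma exact_count (r : ℝ) (hr : 1 < r) (i ℓ : ℕ) (hl : 1 ≤ ℓ) (hli : ℓ ≤ i)
    (hT : ∀ j, i < j → 1 + (pr j : ℝ) ^ (-r) ≤ zetaTail r j) (A : ℕ)
    (hA : ss ((pr ℓ : ℝ) ^ (-r)) (A+1) ≤ ss ((pr ℓ : ℝ) ^ (-r)) A * zetaTail r i)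
    (hA2 : ∀ a, a < A →
      ss ((pr ℓ : ℝ) ^ (-r)) a * zetaTail r i < ss ((pr ℓ : ℝ) ^ (-r)) (a+1)) :
    Cprin r (mm i ℓ) = A + 1 := by
  have q0 := x_pos r ℓ
  have q1 := x_lt r hr ℓ
  have hZ := zt_gt r hr i
  have hlow := @lower r hr i ℓ hl hli hT
  have hcov := @cover _ _ q0 q1 hZ A hA
  have hcp := @cop_m i ℓ ℓ hl (Or.inl rfl)
  unfold Cprin
  set q := (pr ℓ : ℝ) ^ (-r) with hq
  set Z := zetaTail r i with hZd
  have sm := ss_mono q0 q1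
  have spos : ∀ a, 0 < ss q a := fun a => by linarith [ss_ge q0 q1 a]
  have hpos : 0 < 1 - q := by linarith
  have hend : ss q A < (1-q)⁻¹ * Z := by
    have := ss_lt q0 q1 A
    have h2 : 0 < (1-q)⁻¹ := by positivity
    nlinarith
  refine card_comp A (ss q) (fun a => if a < A then ss q a * Z else (1-q)⁻¹ * Z) _ ?_ ?_ ?_
  · apply Set.Subset.antisymm
    · refine closure_minimal ?_ ?_
      · rintro _ ⟨n, hn, rfl⟩
        obtain ⟨a, n', hn', rfl⟩ :=
          Nat.exists_eq_pow_mul_and_not_dvd (ne_of_gt hn) (pr ℓ) (pr_prime _).ne_one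
        have hn0 : 0 < n' := Nat.pos_of_ne_zero (by rintro rfl; simp at hn')
        rw [sig_mul _ _ (((pr_prime _).coprime_iff_not_dvd.2 hn').pow_left a),
          sig_pow _ _ (pr_prime _) q1 hcp, ← hq]
        have e1 := sig_ge (mm i ℓ) r hn0
        have e2 := upper' r hr i ℓ hn0 hn'
        rw [← hZd] at e2
        have e3 := spos a
        rw [Set.mem_iUnion]
        by_cases h : a < A
        · refine ⟨⟨a, by omega⟩, ?_⟩
          simp only [h, if_true, Set.mem_Icc]
          constructor
          · nlinarith
          · gcongr
        · refine ⟨⟨A, by omega⟩, ?_⟩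
          simp only [lt_irrefl, if_false, Set.mem_Icc]
          have e4 := sm.monotone (not_lt.1 h)
          have e5 := ss_lt q0 q1 a
          constructor
          · nlinarith
          · gcongr
      · exact isClosed_iUnion_of_finite fun a => isClosed_Icc
    · refine Set.iUnion_subset fun a => ?_
      by_cases h : (a:ℕ) < A
      · simp only [h, if_true]
        have : ss q a < ss q a * Z := by nlinarith [spos a]
        rw [← closure_Ico this.ne]
        exact closure_minimal (fun y hy => hlow hy.1 hy.2) isClosed_closure
      · have ha : (a:ℕ) = A := by omega
        simp only [ha, lt_irrefl, if_false]
        rw [← closure_Ico hend.ne]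
        refine closure_minimal (fun y hy => ?_) isClosed_closure
        obtain ⟨b, hb1, hb2⟩ := hcov hy.1 hy.2
        exact hlow hb1 hb2
  · intro a ha
    split_ifs with h
    · nlinarith [spos a]
    · have : a = A := by omega
      rw [this]; exact hend.le
  · intro a ha
    simp only [ha, if_true]
    exact hA2 a ha

lemma count_formula (r : ℝ) (hr : 1 < r) (i ℓ : ℕ) (hl : 1 ≤ ℓ) (hli : ℓ ≤ i)
    (hT : ∀ j, i < j → 1 + (pr j : ℝ) ^ (-r) ≤ zetaTail r j) :
    (Cprin r (mm i ℓ) : ℤ) =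
        ⌈Real.log ((zetaTail r i - 1) / (zetaTail r i - (pr ℓ : ℝ) ^ (-r))) /
          Real.log ((pr ℓ : ℝ) ^ (-r))⌉ := by
  have q0 := x_pos r ℓ
  have q1 := x_lt r hr ℓ
  have hZ := zt_gt r hr i
  have hec := exact_count r hr i ℓ hl hli hT
  set q := (pr ℓ : ℝ) ^ (-r) with hq
  set Z := zetaTail r i with hZd
  have hR : 0 < (Z-1)/(Z-q) := div_pos (by linarith) (by linarith)
  have hR1 : (Z-1)/(Z-q) < 1 := (div_lt_one (by linarith)).2 (by linarith)
  have hex : ∃ a : ℕ, q^(a+1) ≤ (Z-1)/(Z-q) := by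
    obtain ⟨n, hn⟩ := exists_pow_lt_of_lt_one hR q1
    exact ⟨n, (pow_le_pow_of_le_one q0.le q1.le (by omega)).trans hn.le⟩
  classical
  obtain ⟨A, hA, hmin⟩ : ∃ A, q^(A+1) ≤ (Z-1)/(Z-q) ∧ ∀ a < A, (Z-1)/(Z-q) < q^(a+1) :=
    ⟨Nat.find hex, Nat.find_spec hex, fun a ha => not_le.1 (Nat.find_min hex ha)⟩
  rw [hec A ((ss_cond q1 hZ A).2 hA) (fun a ha => not_le.1 fun h =>
    absurd ((ss_cond q1 hZ a).1 h) (not_le.2 (hmin a ha)))]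
  have hlog : Real.log q < 0 := Real.log_neg q0 q1
  have hlt : (Z-1)/(Z-q) < q^A := by
    rcases A with _ | A
    · simpa using hR1
    · exact hmin A (by omega)
  symm
  rw [Int.ceil_eq_iff]
  push_cast
  rw [lt_div_iff_of_neg hlog, div_le_iff_of_neg hlog]
  constructor
  · have := Real.log_lt_log hR hlt
    rw [Real.log_pow] at this
    linarith
  · have := Real.log_le_log (by positivity) hA
    rw [Real.log_pow] at this
    push_cast at this
    linarith

/-- With `j₁` the least positive integer `j₀` such that `ζ_j(r) ≥ 1 + p_j^{-r}` for all
`j > j₀`, `ℓ = max 2 j₁`, `i₀ = j₁` if `j₁ ≥ 2` and otherwise the least positive integer `i`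
with `ζ_i(r) < 1 + 3^{-r}`, and `m_i = (∏_{p ≤ p_i} p) / p_ℓ`: for every `i ≥ i₀` the number
of connected components of the closure of `σ_{r,ℚ,χ_{m_i}}(ℕ)` equals
`⌈log((ζ_i(r) − 1)/(ζ_i(r) − p_ℓ^{-r})) / log(p_ℓ^{-r})⌉`; moreover `i ↦ C_{r,ℚ,χ_{m_i}}` is
non-decreasing on `[i₀, ∞)` and tends to infinity. -/
theorem stmt9 (r : ℝ) (hr : 1 < r)
    (j₁ : ℕ)
    (hj₁ : IsLeast {j₀ : ℕ | 0 < j₀ ∧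
      ∀ j : ℕ, j₀ < j → 1 + (pr j : ℝ) ^ (-r) ≤ zetaTail r j} j₁)
    (ℓ : ℕ) (hℓ : ℓ = max 2 j₁)
    (i₀ : ℕ)
    (hi₀ : if 2 ≤ j₁ then i₀ = j₁
      else IsLeast {i : ℕ | 0 < i ∧ zetaTail r i < 1 + (3 : ℝ) ^ (-r)} i₀)
    (mseq : ℕ → ℕ)
    (hm : ∀ i : ℕ, i₀ ≤ i → mseq i = ∏ k ∈ (Finset.Icc 1 i).erase ℓ, pr k) :
    (∀ i : ℕ, i₀ ≤ i →
      (Cprin r (mseq i) : ℤ) =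
        ⌈Real.log ((zetaTail r i - 1) / (zetaTail r i - (pr ℓ : ℝ) ^ (-r))) /
          Real.log ((pr ℓ : ℝ) ^ (-r))⌉) ∧
    (∀ i i' : ℕ, i₀ ≤ i → i ≤ i' → Cprin r (mseq i) ≤ Cprin r (mseq i')) ∧
    (∀ B : ℕ, ∃ i : ℕ, i₀ ≤ i ∧ B ≤ Cprin r (mseq i)) := by
  have hj1 := hj₁.1.1
  have hjT := hj₁.1.2
  have hl : 1 ≤ ℓ := by omega
  have hli₀ : ℓ ≤ i₀ ∧ j₁ ≤ i₀ := by
    split_ifs at hi₀ with h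
    · omega
    · have hj : j₁ = 1 := by omega
      obtain ⟨⟨h1, h2⟩, -⟩ := hi₀
      have hp2 : pr 2 = 3 := by
        simp [pr, Nat.nth_prime_one_eq_three]
      have h3 := hjT 2 (by omega)
      rw [hp2] at h3
      push_cast at h3
      have : ¬ i₀ ≤ 2 := fun h => by
        have := zt_anti r hr h
        linarith
      omega
  have hform : ∀ i : ℕ, i₀ ≤ i →
      (Cprin r (mseq i) : ℤ) =
        ⌈Real.log ((zetaTail r i - 1) / (zetaTail r i - (pr ℓ : ℝ) ^ (-r))) /
          Real.log ((pr ℓ : ℝ) ^ (-r))⌉ := by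
    intro i hi
    rw [hm i hi]
    exact count_formula r hr i ℓ hl (by omega) fun j hj => hjT j (by omega)
  have q0 := x_pos r ℓ
  have q1 := x_lt r hr ℓ
  have hlog : Real.log ((pr ℓ : ℝ) ^ (-r)) < 0 := Real.log_neg q0 q1
  refine ⟨hform, ?_, ?_⟩
  · intro i i' hi hii
    have : (Cprin r (mseq i) : ℤ) ≤ Cprin r (mseq i') := by
      rw [hform i hi, hform i' (hi.trans hii)]
      apply Int.ceil_mono
      have hZ := zt_gt r hr i
      have hZ' := zt_gt r hr i'
      have hle := zt_anti r hr hii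
      rw [div_le_div_right_of_neg hlog]
      refine Real.log_le_log (div_pos (by linarith) (by linarith)) ?_
      rw [div_le_div_iff₀ (by linarith) (by linarith)]
      nlinarith
    exact_mod_cast this
  · intro B
    have h1 : Tendsto (fun i => (zetaTail r i - 1) / (zetaTail r i - (pr ℓ : ℝ) ^ (-r))) atTop
        (𝓝 ((1 - 1) / (1 - (pr ℓ : ℝ) ^ (-r)))) :=
      ((zt_lim r hr).sub_const 1).div ((zt_lim r hr).sub_const _) (by linarith)
    rw [sub_self, zero_div] at h1
    obtain ⟨i, h2, hi⟩ := ((h1.eventually_lt_const (pow_pos q0 B)).and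
      (eventually_ge_atTop i₀)).exists
    refine ⟨i, hi, ?_⟩
    have : (B : ℤ) ≤ Cprin r (mseq i) := by
      rw [hform i hi]
      have hZ := zt_gt r hr i
      have h3 := Real.log_lt_log (div_pos (by linarith) (by linarith)) h2
      rw [Real.log_pow] at h3
      have h4 : (B:ℝ) < Real.log ((zetaTail r i - 1) / (zetaTail r i - (pr ℓ : ℝ) ^ (-r))) /
          Real.log ((pr ℓ : ℝ) ^ (-r)) := by
        rw [lt_div_iff_of_neg hlog]; exact h3
      exact_mod_cast h4.le.trans (Int.le_ceil _)
    exact_mod_cast this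
end
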